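/- arXiv:1706.01579 — 10 statements merged into one kernel-verified Lean document; each statement's English description precedes it below -/
import Mathlib

section
/- A set S ⊆ ℤ⁺ is a ladder if and only if for every positive integer n the set S ∩ nℤ (the elements of S divisible by n) is a ladder. -/
/-- A set `S ⊆ ℤ⁺` is a *ladder* if for every `k ≥ 1`, every coloring `χ : ℤ → Fin k`,
and every length `L`, there is a monochromatic arithmetic progression of length `L`
with common difference in `S`. -/
def IsLadder (S : Set ℤ) : Prop :=
  ∀ k : ℕ, 1 ≤ k → ∀ χ : ℤ → Fin k, ∀ L : ℕ,
    ∃ a : ℤ, ∃ d ∈ S, ∀ i : ℕ, i < L → χ (a + (i : ℤ) * d) = χ a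

namespace IsLadder

variable {S T : Set ℤ}

theorem mono (hS : IsLadder S) (hST : S ⊆ T) : IsLadder T := by
  intro k hk χ L
  obtain ⟨a, d, hd, hχ⟩ := hS k hk χ L
  exact ⟨a, d, hST hd, hχ⟩

theorem exists_monochromatic {κ : Type*} [Finite κ] (hS : IsLadder S) (χ : ℤ → κ) (L : ℕ) :
    ∃ a : ℤ, ∃ d ∈ S, ∀ i : ℕ, i < L → χ (a + (i : ℤ) * d) = χ a := by
  have : Nonempty κ := ⟨χ 0⟩
  obtain ⟨a, d, hd, hχ⟩ := hS (Nat.card κ) Nat.card_pos (Finite.equivFin κ ∘ χ) L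
  exact ⟨a, d, hd, fun i hi ↦ (Finite.equivFin κ).injective (hχ i hi)⟩

theorem sep_dvd (hS : IsLadder S) {n : ℤ} (hn : n ≠ 0) : IsLadder {s ∈ S | n ∣ s} := by
  intro k _ χ L
  have : NeZero n.natAbs := ⟨Int.natAbs_ne_zero.mpr hn⟩
  -- Refine `χ` by residues mod `n`: a progression with at least two terms that is monochromatic
  -- for the refinement has common difference divisible by `n`.
  obtain ⟨a, d, hd, hχ⟩ :=
    hS.exists_monochromatic (fun x ↦ (χ x, (x : ZMod n.natAbs))) (max L 2)
  have residue_eq : ((a + d : ℤ) : ZMod n.natAbs) = a := by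
    simpa using congrArg Prod.snd (hχ 1 (by simp))
  have residue_zero : (d : ZMod n.natAbs) = 0 := by simpa using residue_eq
  have n_dvd : n ∣ d := Int.natAbs_dvd.mp ((ZMod.intCast_zmod_eq_zero_iff_dvd _ _).mp residue_zero)
  exact ⟨a, d, ⟨hd, n_dvd⟩, fun i hi ↦ congrArg Prod.fst (hχ i (lt_max_of_lt_left hi))⟩

end IsLadder

theorem ladder_iff_forall_inter_multiples_general (S : Set ℤ) :
    IsLadder S ↔ ∀ n : ℤ, 0 < n → IsLadder {s ∈ S | n ∣ s} :=
  ⟨fun hS _ hn ↦ hS.sep_dvd hn.ne', fun h ↦ (h 1 one_pos).mono (Set.sep_subset S _)⟩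

/-- A set `S ⊆ ℤ⁺` is a ladder iff for every positive integer `n` the set of
elements of `S` divisible by `n` is a ladder. -/
theorem ladder_iff_forall_inter_multiples (S : Set ℤ) (hS : ∀ s ∈ S, 0 < s) :
    IsLadder S ↔ ∀ n : ℤ, 0 < n → IsLadder {s ∈ S | n ∣ s} :=
  ladder_iff_forall_inter_multiples_general S
end

section
/- Let S ⊆ ℤ⁺. If there exist a positive integer n, a number of colors k, a coloring χ : ℤ → Fin k, and a bound B ∈ ℕ such that every monochromatic arithmetic progression (for χ) with common difference in S ∩ nℤ has length at most B, then there exist k' ≥ 1, a coloring χ' : ℤ → Fin k', and a bound B' ∈ ℕ such that every monochromatic arithmetic progression (for χ') with common difference in S has length at most B'. -/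
/-!
A progression whose difference lies outside a subgroup `H` changes its coset of `H` at every step,
so refining a coloring by the cosets of `H` leaves monochromatic progressions of length at least two
only for differences in `H`. When `H` has finite index, finitely many colors suffice, and the
differences in `H` are controlled by the coloring one started from.
-/

section Progressions

variable {G κ κ' : Type*} [AddMonoid G] {χ : G → κ} {S T : Set G} {B C : ℕ}

/-- The arithmetic progression `a, a + d, …, a + (L - 1) • d` is monochromatic for the coloring
`χ`. Comparing every term with `a` makes the empty progression monochromatic. -/
def IsMonochromaticAP (χ : G → κ) (a d : G) (L : ℕ) : Prop :=
  ∀ i < L, χ (a + i • d) = χ a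

/-- `B` bounds the lengths of the `χ`-monochromatic arithmetic progressions with common difference
in `S`. -/
def MonochromaticAPBound (χ : G → κ) (S : Set G) (B : ℕ) : Prop :=
  ∀ a, ∀ d ∈ S, ∀ L, IsMonochromaticAP χ a d L → L ≤ B

/-- Some finite coloring has monochromatic arithmetic progressions of bounded length only, for
differences in `S`; the sets without such a coloring are the ladders. Colors are taken in `Fin k`
to avoid quantifying over types; `HasFiniteObstruction.of_finite` allows any finite type. -/
def HasFiniteObstruction (S : Set G) : Prop :=
  ∃ (k : ℕ) (χ : G → Fin k) (B : ℕ), MonochromaticAPBound χ S B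

theorem IsMonochromaticAP.of_comp_injective {f : κ → κ'} (hf : f.Injective) {a d : G} {L : ℕ}
    (h : IsMonochromaticAP (f ∘ χ) a d L) : IsMonochromaticAP χ a d L :=
  fun i hi ↦ hf (h i hi)

theorem MonochromaticAPBound.comp_injective (h : MonochromaticAPBound χ S B) {f : κ → κ'}
    (hf : f.Injective) : MonochromaticAPBound (f ∘ χ) S B :=
  fun a d hd L hL ↦ h a d hd L (hL.of_comp_injective hf)

theorem MonochromaticAPBound.mono (h : MonochromaticAPBound χ T B) (hST : S ⊆ T) :
    MonochromaticAPBound χ S B :=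
  fun a d hd ↦ h a d (hST hd)

theorem MonochromaticAPBound.prodMk_union {ψ : G → κ'} (hχ : MonochromaticAPBound χ S B)
    (hψ : MonochromaticAPBound ψ T C) :
    MonochromaticAPBound (fun x ↦ (χ x, ψ x)) (S ∪ T) (max B C) := by
  rintro a d (hd | hd) L hL
  · exact le_max_of_le_left (hχ a d hd L fun i hi ↦ congrArg Prod.fst (hL i hi))
  · exact le_max_of_le_right (hψ a d hd L fun i hi ↦ congrArg Prod.snd (hL i hi))

theorem monochromaticAPBound_one_of_ne (h : ∀ a, ∀ d ∈ S, χ (a + d) ≠ χ a) :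
    MonochromaticAPBound χ S 1 := by
  intro a d hd L hL
  by_contra! hlt
  exact h a d hd (by simpa only [one_nsmul] using hL 1 hlt)

theorem HasFiniteObstruction.of_finite [Finite κ] (h : MonochromaticAPBound χ S B) :
    HasFiniteObstruction S :=
  ⟨Nat.card κ, Finite.equivFin κ ∘ χ, B, h.comp_injective (Finite.equivFin κ).injective⟩

end Progressions

theorem monochromaticAPBound_quotient_mk {G : Type*} [AddGroup G] (H : AddSubgroup G) :
    MonochromaticAPBound (QuotientAddGroup.mk : G → G ⧸ H) (H : Set G)ᶜ 1 :=
  monochromaticAPBound_one_of_ne fun a d hd h ↦ hd <| by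
    simpa only [SetLike.mem_coe, neg_add_cancel_left] using QuotientAddGroup.eq.mp h.symm

theorem hasFiniteObstruction_int_iff {S : Set ℤ} :
    HasFiniteObstruction S ↔ ∃ k : ℕ, 1 ≤ k ∧ ∃ χ : ℤ → Fin k, ∃ B : ℕ,
      ∀ a : ℤ, ∀ d ∈ S, ∀ L : ℕ,
        (∀ i : ℕ, i < L → χ (a + (i : ℤ) * d) = χ a) → L ≤ B := by
  simp only [HasFiniteObstruction, MonochromaticAPBound, IsMonochromaticAP, nsmul_eq_mul]
  exact ⟨fun ⟨k, χ, h⟩ ↦ ⟨k, (χ 0).pos, χ, h⟩, fun ⟨k, _, h⟩ ↦ ⟨k, h⟩⟩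

theorem finiteIndex_zmultiples_int {n : ℤ} (hn : n ≠ 0) :
    (AddSubgroup.zmultiples n).FiniteIndex :=
  ⟨by simpa only [Int.index_zmultiples, Int.natAbs_ne_zero] using hn⟩

theorem obstruction_lifts_general {G : Type*} [AddGroup G] (H : AddSubgroup G) [H.FiniteIndex]
    {S : Set G} (h : HasFiniteObstruction (S ∩ H)) : HasFiniteObstruction S := by
  obtain ⟨k, χ, B, hχ⟩ := h
  have hS : S ⊆ S ∩ H ∪ (H : Set G)ᶜ := by
    rw [Set.inter_union_distrib_right, Set.union_compl_self, Set.inter_univ]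
    exact Set.subset_union_left
  exact .of_finite ((hχ.prodMk_union (monochromaticAPBound_quotient_mk H)).mono hS)

/-- If for some positive integer `n` there is a finite coloring `χ : ℤ → Fin k` and a
bound `B` such that every `χ`-monochromatic arithmetic progression with common
difference in `S ∩ nℤ` has length at most `B`, then there is a finite coloring
`χ' : ℤ → Fin k'` and a bound `B'` such that every `χ'`-monochromatic arithmetic
progression with common difference in `S` has length at most `B'`. -/
theorem obstruction_lifts (S : Set ℤ) (hS : ∀ s ∈ S, 0 < s)
    (h : ∃ n : ℤ, 0 < n ∧ ∃ k : ℕ, 1 ≤ k ∧ ∃ χ : ℤ → Fin k, ∃ B : ℕ,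
      ∀ a : ℤ, ∀ d ∈ S, n ∣ d → ∀ L : ℕ,
        (∀ i : ℕ, i < L → χ (a + (i : ℤ) * d) = χ a) → L ≤ B) :
    ∃ k' : ℕ, 1 ≤ k' ∧ ∃ χ' : ℤ → Fin k', ∃ B' : ℕ,
      ∀ a : ℤ, ∀ d ∈ S, ∀ L : ℕ,
        (∀ i : ℕ, i < L → χ' (a + (i : ℤ) * d) = χ' a) → L ≤ B' := by
  obtain ⟨n, hn, h⟩ := h
  have := finiteIndex_zmultiples_int hn.ne'
  refine hasFiniteObstruction_int_iff.mp <| obstruction_lifts_general (.zmultiples n) <|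
    hasFiniteObstruction_int_iff.mpr ?_
  simpa only [Set.mem_inter_iff, SetLike.mem_coe, Int.mem_zmultiples_iff, and_imp] using h
end

section
/- Let S = {s₁ < s₂ < s₃ < ⋯} ⊆ ℤ⁺ and suppose there exists ε > 0 such that s_{i+1} ≥ (1+ε)·s_i for all i. Then S is not a ladder. -/
/-!
If a homomorphism from `ℤ` to a compact group keeps the image of `S` away from `0`, then coloring
each integer by the piece of a fine finite partition containing its image already rules out
monochromatic progressions of length two. For an exponentially growing `S` such a homomorphism to a
torus exists: split `S` into finitely many subsequences of ratio at least `3`, and rotate the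
circle, for each of them, by an angle `α` for which every `α * s` is within `1/4` of `1/2` modulo
`1`. The admissible `α` for a given `s` form intervals of length `1 / (2 * s)`, one in every period
`1 / s`; each of them contains a whole interval for the next term, as that term is at least `3 * s`,
so compactness provides a common `α`.
-/

open Set Metric

/-- A sequence of positive real numbers is *lacunary* with ratio `q` if each term is at least
`q` times the preceding one. The ratio is not required to exceed `1`. -/
structure IsLacunary (q : ℝ) (t : ℕ → ℝ) : Prop where
  pos : ∀ i, 0 < t i
  mul_le : ∀ i, q * t i ≤ t (i + 1)

namespace IsLacunary

variable {q : ℝ} {t : ℕ → ℝ}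

lemma mono {q' : ℝ} (ht : IsLacunary q t) (hq : q' ≤ q) : IsLacunary q' t where
  pos := ht.pos
  mul_le i := (mul_le_mul_of_nonneg_right hq (ht.pos i).le).trans (ht.mul_le i)

lemma comp_add_mul (ht : IsLacunary q t) (hq : 0 ≤ q) (r m : ℕ) :
    IsLacunary (q ^ m) (fun i ↦ t (r + m * i)) where
  pos i := ht.pos _
  mul_le i := by
    rw [mul_add_one, ← add_assoc]
    exact geom_le (u := fun j ↦ t (r + m * i + j)) hq m fun _ _ ↦ ht.mul_le _

end IsLacunary

lemma exists_int_closedBall_subset {q t u : ℝ} (hq : 1 < q) (ht : 0 < t) (hu : q * t ≤ u)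
    (x θ : ℝ) :
    ∃ n : ℤ, closedBall ((n + θ) / u) ((2 * (q - 1))⁻¹ / u) ⊆
      closedBall (x / t) ((2 * (q - 1))⁻¹ / t) := by
  set r := (2 * (q - 1))⁻¹ with hr
  have hq' : 0 < q - 1 := sub_pos.2 hq
  have hr_pos : 0 < r := by positivity
  have hu_pos : 0 < u := by nlinarith
  have hr_mul : r * (q - 1) = 1 / 2 := by rw [hr]; field_simp
  have hq_le : q ≤ u / t := (le_div_iff₀ ht).2 hu
  refine ⟨round (x * (u / t) - θ), closedBall_subset_closedBall' ?_⟩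
  set n := round (x * (u / t) - θ)
  have hdist : dist ((n + θ) / u) (x / t) = |x * (u / t) - θ - n| / u := by
    have hsub : x / t - (n + θ) / u = (x * (u / t) - θ - n) / u := by field_simp; ring
    rw [dist_comm, Real.dist_eq, hsub, abs_div, abs_of_pos hu_pos]
  calc r / u + dist ((n + θ) / u) (x / t)
      ≤ r / u + 1 / 2 / u := by rw [hdist]; gcongr; exact abs_sub_round _
    _ = r * q / u := by rw [← hr_mul]; ring
    _ ≤ r * (u / t) / u := by gcongr
    _ = r / t := by field_simp

lemma IsLacunary.exists_forall_norm_mul_sub_le {q : ℝ} {t : ℕ → ℝ} (ht : IsLacunary q t)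
    (hq : 1 < q) (θ : ℕ → ℝ) :
    ∃ α : ℝ, ∀ i, ‖((α * t i - θ i : ℝ) : UnitAddCircle)‖ ≤ (2 * (q - 1))⁻¹ := by
  have hr : 0 < (2 * (q - 1))⁻¹ := inv_pos.2 (by linarith)
  set r := (2 * (q - 1))⁻¹
  let B (i : ℕ) (n : ℤ) : Set ℝ := closedBall ((n + θ i) / t i) (r / t i)
  have hstep (i : ℕ) (n : ℤ) : ∃ n', B (i + 1) n' ⊆ B i n :=
    exists_int_closedBall_subset hq (ht.pos i) (ht.mul_le i) _ _
  choose next hnext using hstep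
  obtain ⟨n, hn⟩ : ∃ n : ℕ → ℤ, ∀ i, B (i + 1) (n (i + 1)) ⊆ B i (n i) :=
    ⟨Nat.rec (motive := fun _ ↦ ℤ) 0 next, fun i ↦ hnext i _⟩
  obtain ⟨α, hα⟩ : (⋂ i, B i (n i)).Nonempty :=
    IsCompact.nonempty_iInter_of_sequence_nonempty_isCompact_isClosed _ hn
      (fun i ↦ nonempty_closedBall.2 (div_nonneg hr.le (ht.pos i).le))
      (isCompact_closedBall _ _) (fun _ ↦ isClosed_closedBall)
  refine ⟨α, fun i ↦ ?_⟩
  have hti := ht.pos i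
  have hαi : |α - (n i + θ i) / t i| ≤ r / t i := mem_iInter.1 hα i
  calc ‖((α * t i - θ i : ℝ) : UnitAddCircle)‖
      ≤ |α * t i - θ i - n i| := by rw [UnitAddCircle.norm_eq]; exact round_le _ _
    _ = |α - (n i + θ i) / t i| * t i := by
      have hmul : α * t i - θ i - n i = (α - (n i + θ i) / t i) * t i := by field_simp; ring
      rw [hmul, abs_mul, abs_of_pos hti]
    _ ≤ r := (le_div_iff₀ hti).1 hαi

lemma IsLacunary.exists_forall_le_norm_mul {q : ℝ} {t : ℕ → ℝ} (ht : IsLacunary q t)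
    (hq : 1 < q) :
    ∃ α : ℝ, ∀ i, 1 / 2 - (2 * (q - 1))⁻¹ ≤ ‖((α * t i : ℝ) : UnitAddCircle)‖ := by
  obtain ⟨α, hα⟩ := ht.exists_forall_norm_mul_sub_le hq fun _ ↦ 1 / 2
  refine ⟨α, fun i ↦ ?_⟩
  have hhalf : ‖((1 / 2 : ℝ) : UnitAddCircle)‖ = 1 / 2 := by
    simpa using AddCircle.norm_half_period_eq (1 : ℝ)
  have htri := norm_sub_norm_le ((1 / 2 : ℝ) : UnitAddCircle) ((α * t i : ℝ) : UnitAddCircle)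
  rw [norm_sub_rev, ← AddCircle.coe_sub, hhalf] at htri
  linarith [hα i]

lemma IsLacunary.exists_fin_forall_exists_le_norm_mul {q δ : ℝ} {t : ℕ → ℝ}
    (ht : IsLacunary q t) (hq : 1 < q) (hδ : δ < 1 / 2) :
    ∃ (m : ℕ) (α : Fin m → ℝ), ∀ i, ∃ r, δ ≤ ‖((α r * t i : ℝ) : UnitAddCircle)‖ := by
  have hδ' : 0 < 1 - 2 * δ := by linarith
  -- The ratio `Q` solves `1 / 2 - (2 * (Q - 1))⁻¹ = δ`.
  set Q := 1 + (1 - 2 * δ)⁻¹ with hQ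
  have hQ_one : 1 < Q := lt_add_of_pos_right 1 (inv_pos.2 hδ')
  have hQ_eq : 1 / 2 - (2 * (Q - 1))⁻¹ = δ := by
    rw [hQ, add_sub_cancel_left, mul_inv, inv_inv]
    ring
  obtain ⟨m, hm⟩ := pow_unbounded_of_one_lt Q hq
  have hm_pos : 0 < m := Nat.pos_of_ne_zero fun h ↦ by
    rw [h, pow_zero] at hm
    exact hm.not_gt hQ_one
  have hsub (r : Fin m) : IsLacunary Q (fun i ↦ t (r + m * i)) :=
    (ht.comp_add_mul (by linarith) r m).mono hm.le
  choose α hα using fun r ↦ (hsub r).exists_forall_le_norm_mul hQ_one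
  refine ⟨m, α, fun i ↦ ⟨⟨i % m, Nat.mod_lt i hm_pos⟩, ?_⟩⟩
  simpa only [hQ_eq, Nat.mod_add_div] using hα ⟨i % m, Nat.mod_lt i hm_pos⟩ (i / m)

lemma exists_coloring_dist_lt_of_totallyBounded {X : Type*} [PseudoMetricSpace X]
    (hX : TotallyBounded (univ : Set X)) {δ : ℝ} (hδ : 0 < δ) :
    ∃ (k : ℕ) (c : X → Fin k), ∀ x y, c x = c y → dist x y < δ := by
  obtain ⟨C, hC_fin, hC⟩ := Metric.totallyBounded_iff.1 hX (δ / 2) (half_pos hδ)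
  have hnear (x : X) : ∃ z : C, dist x z < δ / 2 := by simpa using hC (mem_univ x)
  choose center hcenter using hnear
  have := hC_fin.to_subtype
  refine ⟨_, Finite.equivFin C ∘ center, fun x y hxy ↦ ?_⟩
  have hxy : center x = center y := (Finite.equivFin C).injective hxy
  calc dist x y ≤ dist x (center x) + dist y (center x) := dist_triangle_right ..
    _ < δ / 2 + δ / 2 := add_lt_add (hcenter x) (hxy ▸ hcenter y)
    _ = δ := add_halves δ

lemma not_isLadder_of_forall_le_norm_zsmul {E : Type*} [SeminormedAddCommGroup E]
    (hE : TotallyBounded (univ : Set E)) (α : E) {S : Set ℤ} {δ : ℝ} (hδ : 0 < δ)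
    (hS : ∀ d ∈ S, δ ≤ ‖d • α‖) : ¬ IsLadder S := by
  intro hladder
  obtain ⟨k, c, hc⟩ := exists_coloring_dist_lt_of_totallyBounded hE hδ
  obtain ⟨a, d, hd, hmono⟩ := hladder k (c 0).pos (fun x ↦ c (x • α)) 2
  have hclose := hc _ _ (hmono 1 one_lt_two)
  rw [Nat.cast_one, one_mul, add_zsmul, dist_self_add_left] at hclose
  exact (hS d hd).not_gt hclose

/-- If `S = {s₁ < s₂ < ⋯} ⊆ ℤ⁺` satisfies `s_{i+1} ≥ (1+ε)·s_i` for all `i` and some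
`ε > 0`, then `S` is not a ladder. -/
theorem not_ladder_of_exponential_growth (s : ℕ → ℤ) (hmono : StrictMono s)
    (hpos : ∀ i, 0 < s i)
    (hgrowth : ∃ ε : ℝ, 0 < ε ∧ ∀ i : ℕ, (1 + ε) * (s i : ℝ) ≤ (s (i + 1) : ℝ)) :
    ¬ IsLadder (Set.range s) := by
  obtain ⟨ε, hε, hstep⟩ := hgrowth
  have hs : IsLacunary (1 + ε) (fun i ↦ (s i : ℝ)) := ⟨fun i ↦ Int.cast_pos.2 (hpos i), hstep⟩
  obtain ⟨m, α, hα⟩ :=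
    hs.exists_fin_forall_exists_le_norm_mul (δ := 1 / 4) (by linarith) (by norm_num)
  let rotation : Fin m → UnitAddCircle := fun r ↦ (α r : UnitAddCircle)
  refine not_isLadder_of_forall_le_norm_zsmul isCompact_univ.totallyBounded rotation
    (δ := 1 / 4) (by norm_num) ?_
  rintro _ ⟨i, rfl⟩
  obtain ⟨r, hr⟩ := hα i
  calc 1 / 4 ≤ ‖((α r * s i : ℝ) : UnitAddCircle)‖ := hr
    _ = ‖(s i • rotation) r‖ := by
      rw [mul_comm, ← zsmul_eq_mul, AddCircle.coe_zsmul, Pi.smul_apply]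
    _ ≤ ‖s i • rotation‖ := norm_le_pi_norm _ r
end

section
/- If S ⊆ ℤ⁺ is not a ladder, then its complement ℤ⁺ \ S is a ladder. -/
theorem IsLadder.exists_mono_progression {S : Set ℤ} (hS : IsLadder S) {κ : Type*} [Finite κ]
    (χ : ℤ → κ) (L : ℕ) :
    ∃ a : ℤ, ∃ d ∈ S, ∀ i : ℕ, i < L → χ (a + (i : ℤ) * d) = χ a := by
  obtain ⟨k, ⟨e⟩⟩ := Finite.exists_equiv_fin κ
  obtain ⟨a, d, hd, hmono⟩ := hS k (e (χ 0)).pos (e ∘ χ) L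
  exact ⟨a, d, hd, fun i hi => e.injective (hmono i hi)⟩

theorem IsLadder.or_of_union {A B : Set ℤ} (hAB : IsLadder (A ∪ B)) :
    IsLadder A ∨ IsLadder B := by
  by_contra! ⟨hA, hB⟩
  unfold IsLadder at hA hB
  push Not at hA hB
  obtain ⟨k₁, -, χ₁, L₁, hχ₁⟩ := hA
  obtain ⟨k₂, -, χ₂, L₂, hχ₂⟩ := hB
  obtain ⟨a, d, hd, hmono⟩ :=
    hAB.exists_mono_progression (fun x => (χ₁ x, χ₂ x)) (max L₁ L₂)
  rcases hd with hdA | hdB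
  · obtain ⟨i, hi, hne⟩ := hχ₁ a d hdA
    exact hne (congrArg Prod.fst (hmono i (lt_max_of_lt_left hi)))
  · obtain ⟨i, hi, hne⟩ := hχ₂ a d hdB
    exact hne (congrArg Prod.snd (hmono i (lt_max_of_lt_right hi)))

/-- Van der Waerden's theorem. -/
theorem isLadder_setOf_pos : IsLadder {x : ℤ | 0 < x} := by
  intro k _ χ L
  obtain ⟨d, hd, a, c, hmono⟩ := Combinatorics.exists_mono_homothetic_copy
    ((Finset.range (L + 1)).image ((↑) : ℕ → ℤ)) χ
  have color_eq (i : ℕ) (hi : i ≤ L) : χ (a + i * d) = c := by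
    rw [← hmono i (Finset.mem_image_of_mem _ (Finset.mem_range_succ_iff.2 hi)),
      nsmul_eq_mul, mul_comm, add_comm]
  have color_start : χ a = c := by simpa using color_eq 0 L.zero_le
  exact ⟨a, d, Int.natCast_pos.2 hd, fun i hi => (color_eq i hi.le).trans color_start.symm⟩

/-- The complement (within `ℤ⁺`) of a non-ladder is a ladder. -/
theorem ladder_of_compl_not_ladder (S : Set ℤ) (hS : ∀ s ∈ S, 0 < s)
    (h : ¬ IsLadder S) : IsLadder ({x : ℤ | 0 < x} \ S) := by
  have hS_pos : S ⊆ {x : ℤ | 0 < x} := hS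
  have union_isLadder : IsLadder (S ∪ ({x : ℤ | 0 < x} \ S)) := by
    rw [Set.union_sdiff_cancel hS_pos]
    exact isLadder_setOf_pos
  exact union_isLadder.or_of_union.resolve_left h
end

section
/- Let P be a nonconstant polynomial with integer coefficients, positive leading coefficient, and P(0) = 0. If a set S ⊆ ℤ⁺ contains P(ℤ) ∩ ℤ⁺ (all positive values taken by P on the integers), then S is a ladder. -/
/-!
The theorem is the polynomial van der Waerden theorem for the system `P, 2P, …, (L - 1)P`, with the
argument of `P` restricted to a half-line on which `P` is positive.

The polynomial van der Waerden theorem is proved by PET induction (polynomial exhaustion) and color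
focusing. Fix `p₁` of minimal degree in a finite system `A` of nonzero polynomials without constant
term. The differences `x ↦ p (x + d) - p d - p₁ x`, for `p ∈ A` and finitely many `d`, form a system
of smaller weight. Suppose that the configurations `a + p d`, `p ∈ A`, are monochromatic for some
shifts `d`, with a color depending on `d`. Recurrence of the difference system provides `e` such
that the configurations with base point `a - p₁ e` and shifts `d + e` keep these colors, while the
shift `e` contributes the color of `a`. Either the color of `a` was already present, and the system
recurs at `a`, or the number of colors has grown, which can happen only finitely often.
-/

section PolynomialVanDerWaerden

open Polynomial Finset
open scoped Pointwise

variable {R κ : Type*} [CommRing R]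

/-- The van der Corput difference `x ↦ p (x + d) - p d - p₁ x`, the operation that lowers the weight
of a system of polynomials in PET induction. -/
noncomputable def vdcDiff (p₁ p : R[X]) (d : R) : R[X] :=
  taylor d p - (C (p.eval d) + p₁)

@[simp]
theorem eval_vdcDiff (p₁ p : R[X]) (d x : R) :
    (vdcDiff p₁ p d).eval x = p.eval (x + d) - p.eval d - p₁.eval x := by
  simp [vdcDiff, taylor_eval, sub_sub]

theorem coeff_vdcDiff {n : ℕ} (hn : n ≠ 0) (p₁ p : R[X]) (d : R) :
    (vdcDiff p₁ p d).coeff n = (taylor d p).coeff n - p₁.coeff n := by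
  simp [vdcDiff, coeff_C_of_ne_zero hn]

theorem natDegree_vdcDiff_le {p₁ p : R[X]} (h : p.natDegree ≤ p₁.natDegree) (d : R) :
    (vdcDiff p₁ p d).natDegree ≤ p₁.natDegree := by
  have htaylor : (taylor d p).natDegree ≤ p₁.natDegree := by rwa [natDegree_taylor]
  exact (natDegree_sub_le_of_le htaylor natDegree_C_add.le).trans (max_self _).le

theorem natDegree_C_add_lt_natDegree_taylor {p₁ p : R[X]} (h : p₁.natDegree < p.natDegree)
    (c d : R) : (C c + p₁).natDegree < (taylor d p).natDegree := by
  rwa [natDegree_taylor, natDegree_C_add]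

theorem natDegree_vdcDiff_of_lt {p₁ p : R[X]} (h : p₁.natDegree < p.natDegree) (d : R) :
    (vdcDiff p₁ p d).natDegree = p.natDegree := by
  rw [vdcDiff, natDegree_sub_eq_left_of_natDegree_lt
    (natDegree_C_add_lt_natDegree_taylor h _ d), natDegree_taylor]

theorem leadingCoeff_vdcDiff_of_lt {p₁ p : R[X]} (h : p₁.natDegree < p.natDegree) (d : R) :
    (vdcDiff p₁ p d).leadingCoeff = p.leadingCoeff := by
  rw [vdcDiff, leadingCoeff_sub_of_degree_lt
    (degree_lt_degree (natDegree_C_add_lt_natDegree_taylor h _ d)), leadingCoeff_taylor]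

section Weight

variable [DecidableEq R]

/-- The leading coefficients of the nonzero polynomials of degree `n` in the system `A`. -/
noncomputable def leadingCoeffsOfDegree (A : Finset R[X]) (n : ℕ) : Finset R :=
  {p ∈ A | p ≠ 0 ∧ p.natDegree = n}.image leadingCoeff

theorem mem_leadingCoeffsOfDegree {A : Finset R[X]} {n : ℕ} {c : R} :
    c ∈ leadingCoeffsOfDegree A n ↔
      ∃ p ∈ A, p ≠ 0 ∧ p.natDegree = n ∧ p.leadingCoeff = c := by
  simp [leadingCoeffsOfDegree, and_assoc]

theorem leadingCoeffsOfDegree_erase_zero (A : Finset R[X]) (n : ℕ) :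
    leadingCoeffsOfDegree (A.erase 0) n = leadingCoeffsOfDegree A n := by
  ext c
  simp only [mem_leadingCoeffsOfDegree, mem_erase]
  grind

/-- The weight of a system of polynomials: the number of distinct leading coefficients in each
degree. The colexicographic order compares weights at the highest degree where they differ. -/
noncomputable def petWeight (A : Finset R[X]) : Colex (ℕ →₀ ℕ) :=
  toColex <| Finsupp.onFinset (A.image natDegree) (fun n => #(leadingCoeffsOfDegree A n)) <| by
    intro n hn
    obtain ⟨c, hc⟩ := card_ne_zero.mp hn
    obtain ⟨p, hp, -, hpn, -⟩ := mem_leadingCoeffsOfDegree.mp hc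
    exact mem_image.mpr ⟨p, hp, hpn⟩

variable {A : Finset R[X]} {W : Finset R} {p₁ : R[X]}

theorem leadingCoeffsOfDegree_vdcDiff_of_lt (hW : W.Nonempty) {n : ℕ} (hn : p₁.natDegree < n) :
    leadingCoeffsOfDegree (image₂ (vdcDiff p₁) A W) n = leadingCoeffsOfDegree A n := by
  have ne_zero_of_natDegree {q : R[X]} (hq : q.natDegree = n) : q ≠ 0 :=
    ne_zero_of_natDegree_gt (hn.trans_eq hq.symm)
  ext c
  simp only [mem_leadingCoeffsOfDegree]
  constructor
  · rintro ⟨q, hqA, -, hqn, rfl⟩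
    obtain ⟨p, hp, d, -, rfl⟩ := mem_image₂.mp hqA
    have hlt : p₁.natDegree < p.natDegree := by
      by_contra! hle
      exact (natDegree_vdcDiff_le hle d).not_gt (hn.trans_eq hqn.symm)
    have hpn : p.natDegree = n := (natDegree_vdcDiff_of_lt hlt d).symm.trans hqn
    exact ⟨p, hp, ne_zero_of_natDegree hpn, hpn, (leadingCoeff_vdcDiff_of_lt hlt d).symm⟩
  · rintro ⟨p, hp, -, rfl, rfl⟩
    obtain ⟨d, hd⟩ := hW
    have hdeg := natDegree_vdcDiff_of_lt hn d
    exact ⟨vdcDiff p₁ p d, mem_image₂_of_mem hp hd, ne_zero_of_natDegree hdeg, hdeg,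
      leadingCoeff_vdcDiff_of_lt hn d⟩

theorem leadingCoeffsOfDegree_vdcDiff_subset (hpos : 0 < p₁.natDegree)
    (hmin : ∀ p ∈ A, p ≠ 0 → p₁.natDegree ≤ p.natDegree) :
    leadingCoeffsOfDegree (image₂ (vdcDiff p₁) (A.erase 0) W) p₁.natDegree ⊆
      ((leadingCoeffsOfDegree A p₁.natDegree).erase p₁.leadingCoeff).image
        (· - p₁.leadingCoeff) := by
  intro c hc
  obtain ⟨q, hqA, hq0, hqn, rfl⟩ := mem_leadingCoeffsOfDegree.mp hc
  obtain ⟨p, hp, d, -, rfl⟩ := mem_image₂.mp hqA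
  obtain ⟨hp0, hpA⟩ := mem_erase.mp hp
  have hpn : p.natDegree = p₁.natDegree := by
    by_contra hne
    have hlt := lt_of_le_of_ne (hmin p hpA hp0) (Ne.symm hne)
    exact hne ((natDegree_vdcDiff_of_lt hlt d).symm.trans hqn)
  have hlead : (vdcDiff p₁ p d).leadingCoeff = p.leadingCoeff - p₁.leadingCoeff := by
    rw [leadingCoeff, hqn, coeff_vdcDiff hpos.ne', coeff_natDegree, ← hpn, coeff_taylor_natDegree]
  have hne : p.leadingCoeff ≠ p₁.leadingCoeff := by
    rwa [← sub_ne_zero, ← hlead, leadingCoeff_ne_zero]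
  exact mem_image.mpr ⟨p.leadingCoeff,
    mem_erase.mpr ⟨hne, mem_leadingCoeffsOfDegree.mpr ⟨p, hpA, hp0, hpn, rfl⟩⟩, hlead.symm⟩

theorem petWeight_vdcDiff_lt (hp₁ : p₁ ∈ A) (hpos : 0 < p₁.natDegree)
    (hmin : ∀ p ∈ A, p ≠ 0 → p₁.natDegree ≤ p.natDegree) (hW : W.Nonempty) :
    petWeight (image₂ (vdcDiff p₁) (A.erase 0) W) < petWeight A := by
  refine Finsupp.Colex.lt_iff.mpr ⟨p₁.natDegree, fun n hn => ?_, ?_⟩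
  · change #(leadingCoeffsOfDegree _ n) = #(leadingCoeffsOfDegree A n)
    rw [leadingCoeffsOfDegree_vdcDiff_of_lt hW hn, leadingCoeffsOfDegree_erase_zero]
  · have hmem : p₁.leadingCoeff ∈ leadingCoeffsOfDegree A p₁.natDegree :=
      mem_leadingCoeffsOfDegree.mpr ⟨p₁, hp₁, ne_zero_of_natDegree_gt hpos, rfl, rfl⟩
    calc #(leadingCoeffsOfDegree (image₂ (vdcDiff p₁) (A.erase 0) W) p₁.natDegree)
        ≤ #(((leadingCoeffsOfDegree A p₁.natDegree).erase p₁.leadingCoeff).image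
            (· - p₁.leadingCoeff)) :=
          card_le_card (leadingCoeffsOfDegree_vdcDiff_subset hpos hmin)
      _ ≤ #((leadingCoeffsOfDegree A p₁.natDegree).erase p₁.leadingCoeff) := card_image_le
      _ < #(leadingCoeffsOfDegree A p₁.natDegree) := card_erase_lt_of_mem hmem

end Weight

/-- The finitary polynomial van der Waerden property of the system `A`, with shifts in `D`: the base
point and the shift are found in finite sets depending only on the number of colors. -/
def IsRecurrentSystem (D : AddSubsemigroup R) (A : Finset R[X]) : Prop :=
  ∀ k : ℕ, ∃ U V : Finset R, (∀ d ∈ V, d ∈ D) ∧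
    ∀ χ : R → Fin k, ∃ a ∈ U, ∃ d ∈ V, ∀ p ∈ A, χ (a + p.eval d) = χ a

/-- Every color in `K` is the color of the whole configuration `a + p d`, `p ∈ A`, for some shift
`d ∈ V`. -/
def IsFocusedAt (χ : R → κ) (A : Finset R[X]) (V : Finset R) (a : R) (K : Finset κ) : Prop :=
  ∀ c ∈ K, ∃ d ∈ V, ∀ p ∈ A, χ (a + p.eval d) = c

/-- The intermediate stage of the color focusing argument: every coloring with `k` colors has a
base point at which either the system recurs or `r` colors are focused, with the base point and the
shifts in finite sets that do not depend on the coloring. -/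
def HasFocusing (D : AddSubsemigroup R) (A : Finset R[X]) (k r : ℕ) : Prop :=
  ∃ U V : Finset R, (∀ d ∈ V, d ∈ D) ∧ ∀ χ : R → Fin k, ∃ a ∈ U, ∃ K : Finset (Fin k),
    IsFocusedAt χ A V a K ∧ (χ a ∈ K ∨ #K = r)

variable {D : AddSubsemigroup R} {A : Finset R[X]} {p₁ : R[X]}

theorem IsRecurrentSystem.exists_of_finite [Finite κ] (h : IsRecurrentSystem D A) :
    ∃ U V : Finset R, (∀ d ∈ V, d ∈ D) ∧
      ∀ χ : R → κ, ∃ a ∈ U, ∃ d ∈ V, ∀ p ∈ A, χ (a + p.eval d) = χ a := by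
  obtain ⟨U, V, hV, hrec⟩ := h (Nat.card κ)
  refine ⟨U, V, hV, fun χ => ?_⟩
  obtain ⟨a, ha, d, hd, hχ⟩ := hrec (Finite.equivFin κ ∘ χ)
  exact ⟨a, ha, d, hd, fun p hp => (Finite.equivFin κ).injective (hχ p hp)⟩

theorem IsRecurrentSystem.of_erase_zero [DecidableEq R] (h : IsRecurrentSystem D (A.erase 0)) :
    IsRecurrentSystem D A := by
  intro k
  obtain ⟨U, V, hV, hrec⟩ := h k
  refine ⟨U, V, hV, fun χ => ?_⟩
  obtain ⟨a, ha, d, hd, hχ⟩ := hrec χ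
  refine ⟨a, ha, d, hd, fun p hp => ?_⟩
  obtain rfl | hp0 := eq_or_ne p 0
  · simp
  · exact hχ p (mem_erase.mpr ⟨hp0, hp⟩)

theorem isRecurrentSystem_empty (hD : (D : Set R).Nonempty) : IsRecurrentSystem D ∅ := by
  obtain ⟨d, hd⟩ := hD
  exact fun k => ⟨{0}, {d}, by simpa using hd, fun χ => by simp⟩

theorem IsFocusedAt.mono {χ : R → κ} {V V' : Finset R} {a : R} {K : Finset κ}
    (h : IsFocusedAt χ A V a K) (hV : V ⊆ V') : IsFocusedAt χ A V' a K :=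
  fun c hc => (h c hc).imp fun _ hd => hd.imp_left (@hV _)

theorem IsFocusedAt.insert_color [DecidableEq R] [DecidableEq κ] {χ : R → κ} {V : Finset R}
    {a e : R} {K : Finset κ} (h : IsFocusedAt χ A V a K) (hA : ∀ p ∈ A, p.eval 0 = 0)
    (he : ∀ p ∈ A, ∀ d ∈ insert 0 V,
      χ (a + p.eval d + (vdcDiff p₁ p d).eval e) = χ (a + p.eval d)) :
    IsFocusedAt χ A (insert 0 V + {e}) (a - p₁.eval e) (insert (χ a) K) := by
  have shift {d : R} (hd : d ∈ insert 0 V) {p : R[X]} (hp : p ∈ A) :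
      χ (a - p₁.eval e + p.eval (d + e)) = χ (a + p.eval d) := by
    rw [← he p hp d hd, eval_vdcDiff, add_comm d e]
    congr 1
    ring
  intro c hc
  obtain rfl | hc := mem_insert.mp hc
  · refine ⟨0 + e, add_mem_add (mem_insert_self 0 V) (mem_singleton_self e), fun p hp => ?_⟩
    rw [shift (mem_insert_self 0 V) hp, hA p hp, add_zero]
  · obtain ⟨d, hd, hχ⟩ := h c hc
    have hd' : d ∈ insert 0 V := mem_insert_of_mem hd
    exact ⟨d + e, add_mem_add hd' (mem_singleton_self e),
      fun p hp => (shift hd' hp).trans (hχ p hp)⟩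

theorem hasFocusing_zero (D : AddSubsemigroup R) (A : Finset R[X]) (k : ℕ) :
    HasFocusing D A k 0 :=
  ⟨{0}, ∅, by simp, fun χ => ⟨0, by simp, ∅, by simp [IsFocusedAt]⟩⟩

theorem HasFocusing.succ [DecidableEq R] {k r : ℕ} (h : HasFocusing D A k r)
    (hA : ∀ p ∈ A, p.eval 0 = 0)
    (hdiff : ∀ V, IsRecurrentSystem D (image₂ (vdcDiff p₁) A (insert 0 V))) :
    HasFocusing D A k (r + 1) := by
  obtain ⟨U, V, hV, hfocus⟩ := h
  let T : Finset R := U + image₂ eval (insert 0 V) A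
  -- Recurrence is applied to the coloring that records all colors on a translate of `T`.
  obtain ⟨U', V', hV', hrec⟩ := (hdiff V).exists_of_finite (κ := T → Fin k)
  refine ⟨(U' + U) ∪ (U' + U - V'.image p₁.eval), V ∪ (insert 0 V + V'), ?_, fun χ => ?_⟩
  · simp only [mem_union, mem_add, mem_insert]
    rintro _ (hd | ⟨_, rfl | hd, e, he, rfl⟩)
    · exact hV _ hd
    · simpa using hV' e he
    · exact D.add_mem (hV _ hd) (hV' e he)
  obtain ⟨a', ha', e, he, hχ⟩ := hrec fun x t => χ (x + t)
  obtain ⟨a, ha, K, hK, hcard⟩ := hfocus fun x => χ (a' + x)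
  have hbase : a' + a ∈ U' + U := add_mem_add ha' ha
  have hK' : IsFocusedAt χ A V (a' + a) K := by simpa only [IsFocusedAt, add_assoc] using hK
  by_cases hmem : χ (a' + a) ∈ K
  · exact ⟨a' + a, mem_union_left _ hbase, K, hK'.mono subset_union_left, .inl hmem⟩
  have hinv : ∀ p ∈ A, ∀ d ∈ insert 0 V,
      χ (a' + a + p.eval d + (vdcDiff p₁ p d).eval e) = χ (a' + a + p.eval d) := by
    intro p hp d hd
    have hT : a + p.eval d ∈ T := add_mem_add ha (mem_image₂_of_mem hd hp)
    have := congrFun (hχ _ (mem_image₂_of_mem hp hd)) ⟨a + p.eval d, hT⟩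
    simpa only [add_assoc, add_comm, add_left_comm] using this
  refine ⟨a' + a - p₁.eval e, mem_union_right _ (sub_mem_sub hbase (mem_image_of_mem _ he)),
    insert (χ (a' + a)) K, (hK'.insert_color hA hinv).mono ?_, .inr ?_⟩
  · exact (add_subset_add_left (singleton_subset_iff.mpr he)).trans subset_union_right
  · rw [card_insert_of_notMem hmem, hcard.resolve_left hmem]

theorem IsRecurrentSystem.of_hasFocusing (h : ∀ k, HasFocusing D A k (k + 1)) :
    IsRecurrentSystem D A := by
  intro k
  obtain ⟨U, V, hV, hfocus⟩ := h k
  refine ⟨U, V, hV, fun χ => ?_⟩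
  obtain ⟨a, ha, K, hK, hmem | hcard⟩ := hfocus χ
  · exact ⟨a, ha, hK _ hmem⟩
  · have := card_finset_fin_le K
    omega

theorem IsRecurrentSystem.of_vdcDiff [DecidableEq R] (hA : ∀ p ∈ A, p.eval 0 = 0)
    (hdiff : ∀ V, IsRecurrentSystem D (image₂ (vdcDiff p₁) A (insert 0 V))) :
    IsRecurrentSystem D A := by
  refine .of_hasFocusing fun k => ?_
  induction k + 1 with
  | zero => exact hasFocusing_zero D A k
  | succ r ih => exact ih.succ hA hdiff

theorem isRecurrentSystem_of_eval_zero (hD : (D : Set R).Nonempty) (hA : ∀ p ∈ A, p.eval 0 = 0) :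
    IsRecurrentSystem D A := by
  classical
  induction hw : petWeight A using WellFoundedLT.induction generalizing A with
  | _ w ih =>
  subst hw
  refine .of_erase_zero ?_
  obtain hempty | hne := (A.erase 0).eq_empty_or_nonempty
  · exact hempty ▸ isRecurrentSystem_empty hD
  obtain ⟨p₁, hp₁, hmin⟩ := exists_min_image (A.erase 0) natDegree hne
  obtain ⟨hp₁0, hp₁A⟩ := mem_erase.mp hp₁
  have hpos : 0 < p₁.natDegree :=
    natDegree_pos_iff_degree_pos.mpr (degree_pos_of_root hp₁0 (hA p₁ hp₁A))
  have hA' : ∀ p ∈ A.erase 0, p.eval 0 = 0 := fun p hp => hA p (mem_of_mem_erase hp)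
  refine .of_vdcDiff (p₁ := p₁) hA' fun V => ih _ ?_ ?_ rfl
  · exact petWeight_vdcDiff_lt hp₁A hpos (fun p hp hp0 => hmin p (mem_erase.mpr ⟨hp0, hp⟩))
      (insert_nonempty 0 V)
  · intro q hq
    obtain ⟨p, -, d, -, rfl⟩ := mem_image₂.mp hq
    simp [hA p₁ hp₁A]

theorem polynomial_vanDerWaerden [Finite κ] (hD : (D : Set R).Nonempty)
    (hA : ∀ p ∈ A, p.eval 0 = 0) (χ : R → κ) :
    ∃ a, ∃ d ∈ D, ∀ p ∈ A, χ (a + p.eval d) = χ a := by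
  obtain ⟨U, V, hV, hrec⟩ := (isRecurrentSystem_of_eval_zero hD hA).exists_of_finite (κ := κ)
  obtain ⟨a, -, d, hd, hχ⟩ := hrec χ
  exact ⟨a, d, hV d hd, hχ⟩

end PolynomialVanDerWaerden

open Polynomial Filter in
theorem tendsto_eval_atTop_of_leadingCoeff_nonneg {P : ℤ[X]} (hdeg : 0 < P.degree)
    (hlead : 0 ≤ P.leadingCoeff) : Tendsto (fun x : ℤ => P.eval x) atTop atTop := by
  have hinj : Function.Injective (Int.castRingHom ℝ) := Int.cast_injective
  have hreal := (P.map (Int.castRingHom ℝ)).tendsto_atTop_of_leadingCoeff_nonneg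
    (by rwa [degree_map_eq_of_injective hinj])
    (by rw [leadingCoeff_map_of_injective hinj]; simpa using hlead)
  rw [← tendsto_intCast_atTop_iff (R := ℝ)]
  simpa [Function.comp_def] using hreal.comp tendsto_intCast_atTop_atTop

/-- If `P` is a nonconstant integer polynomial with positive leading coefficient and
`P(0) = 0`, and `S ⊆ ℤ⁺` contains all positive values taken by `P` on `ℤ`, then `S`
is a ladder. -/
theorem ladder_of_superset_polynomial_values (P : Polynomial ℤ)
    (hdeg : 1 ≤ P.natDegree) (hlead : 0 < P.leadingCoeff) (hzero : P.eval 0 = 0)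
    (S : Set ℤ) (hS : ∀ s ∈ S, 0 < s)
    (hsub : {y : ℤ | 0 < y ∧ ∃ x : ℤ, P.eval x = y} ⊆ S) :
    IsLadder S := by
  intro k _ χ L
  obtain ⟨M, hM⟩ : ∃ M : ℤ, ∀ x ≥ M, 0 < P.eval x :=
    ((tendsto_eval_atTop_of_leadingCoeff_nonneg (Polynomial.natDegree_pos_iff_degree_pos.mp hdeg)
      hlead.le).eventually_gt_atTop 0).exists_forall_of_atTop
  let D : AddSubsemigroup ℤ :=
    { carrier := Set.Ici (max M 0)
      add_mem' := by
        simp only [Set.mem_Ici]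
        omega }
  let multiples : Finset (Polynomial ℤ) :=
    (Finset.range L).image fun i : ℕ => (i : Polynomial ℤ) * P
  have hmultiples : ∀ p ∈ multiples, p.eval 0 = 0 := by simp [multiples, hzero]
  obtain ⟨a, x, hx, hχ⟩ := polynomial_vanDerWaerden (D := D) Set.nonempty_Ici hmultiples χ
  have hMx : M ≤ x := (le_max_left M 0).trans hx
  refine ⟨a, P.eval x, hsub ⟨hM x hMx, x, rfl⟩, fun i hi => ?_⟩
  simpa using hχ _ (Finset.mem_image_of_mem _ (Finset.mem_range.mpr hi))
end

section
/- If a set S ⊆ ℤ⁺ contains combinatorial cubes of arbitrarily large dimension (i.e., for every k there is a multiset of k positive integers all of whose nonempty subset sums lie in S), then S is a ladder. -/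
/-!
Fix generators `a` and color a word `v : ι → T` by the color of `∑ j, v j • a j`. Along a
combinatorial line this sum runs through `b + t • d`, `t ∈ T`, where `d` is the sum of the `a j`
over the active coordinates. A line has at least one active coordinate, so `d` is a point of the
cube generated by `a`, and the Hales–Jewett theorem provides a monochromatic line once `ι` is
large.
-/

section CombinatorialCube

variable {ι M : Type*} [AddCommMonoid M]

/-- The combinatorial cube generated by a family `a`: the set of its sums over nonempty finite sets
of indices. A family, rather than a multiset, lets a generator occur with several indices; the
dimension of the cube is the cardinality of `ι`. -/
def combinatorialCube (a : ι → M) : Set M :=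
  {s | ∃ I : Finset ι, I.Nonempty ∧ ∑ i ∈ I, a i = s}

theorem combinatorialCube_subset_iff {a : ι → M} {S : Set M} :
    combinatorialCube a ⊆ S ↔ ∀ I : Finset ι, I.Nonempty → ∑ i ∈ I, a i ∈ S :=
  ⟨fun h I hI => h ⟨I, hI, rfl⟩, fun h _ ⟨I, hI, hs⟩ => hs ▸ h I hI⟩

theorem combinatorialCube_comp_embedding_subset {ι' : Type*} (a : ι → M) (e : ι' ↪ ι) :
    combinatorialCube (a ∘ e) ⊆ combinatorialCube a :=
  combinatorialCube_subset_iff.2 fun I hI => ⟨I.map e, hI.map, I.sum_map e a⟩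

theorem sum_active_mem_combinatorialCube {α : Type*} [Fintype ι] (l : Combinatorics.Line α ι)
    (a : ι → M) [DecidablePred fun j => l.idxFun j = none] :
    ∑ j with l.idxFun j = none, a j ∈ combinatorialCube a :=
  ⟨_, l.proper.imp fun j hj => Finset.mem_filter.2 ⟨Finset.mem_univ j, hj⟩, rfl⟩

end CombinatorialCube

section Homothety

variable {R M : Type*} [AddCommMonoid M] [DistribSMul R M]

theorem exists_sum_smul_line_eq_add_smul {ι α : Type*} [Fintype ι]
    (l : Combinatorics.Line α ι) (f : α → R) (a : ι → M)
    [DecidablePred fun j => l.idxFun j = none] :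
    ∃ b : M, ∀ x, ∑ j, f (l x j) • a j = b + f x • ∑ j with l.idxFun j = none, a j := by
  refine ⟨∑ j with l.idxFun j ≠ none, (l.idxFun j).elim 0 (f · • a j), fun x => ?_⟩
  have inactive : ∑ j with l.idxFun j ≠ none, f (l x j) • a j =
      ∑ j with l.idxFun j ≠ none, (l.idxFun j).elim 0 (f · • a j) := by
    refine Finset.sum_congr rfl fun j hj => ?_
    obtain ⟨y, hy⟩ := Option.ne_none_iff_exists'.1 (Finset.mem_filter.1 hj).2
    rw [l.apply_some hy, hy, Option.elim_some]
  have active : ∑ j with l.idxFun j = none, f (l x j) • a j =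
      f x • ∑ j with l.idxFun j = none, a j := by
    rw [Finset.smul_sum]
    exact Finset.sum_congr rfl fun j hj => by rw [l.apply_none x j (Finset.mem_filter.1 hj).2]
  rw [← inactive, ← active, add_comm, Finset.sum_filter_add_sum_filter_not]

variable {κ : Type*} [Finite κ]

variable (M κ) in
theorem exists_fintype_forall_exists_mono_homothetic_copy (T : Finset R) :
    ∃ (ι : Type) (_ : Fintype ι), ∀ (a : ι → M) (χ : M → κ),
      ∃ b, ∃ d ∈ combinatorialCube a, ∃ c, ∀ t ∈ T, χ (b + t • d) = c := by
  classical
  obtain ⟨ι, _, hι⟩ := Combinatorics.Line.exists_mono_in_high_dimension T κ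
  refine ⟨ι, inferInstance, fun a χ => ?_⟩
  obtain ⟨l, c, hl⟩ := hι fun v => χ (∑ j, (v j : R) • a j)
  obtain ⟨b, hb⟩ := exists_sum_smul_line_eq_add_smul l ((↑) : T → R) a
  exact ⟨b, _, sum_active_mem_combinatorialCube l a, c, fun t ht => hb ⟨t, ht⟩ ▸ hl ⟨t, ht⟩⟩

theorem ladder_of_arbitrarily_large_combinatorial_cubes_general {S : Set M}
    (hcubes : ∀ n : ℕ, ∃ a : Fin n → M, combinatorialCube a ⊆ S) (T : Finset R) (χ : M → κ) :
    ∃ b, ∃ d ∈ S, ∃ c, ∀ t ∈ T, χ (b + t • d) = c := by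
  obtain ⟨ι, _, hι⟩ := exists_fintype_forall_exists_mono_homothetic_copy M κ T
  obtain ⟨a, ha⟩ := hcubes (Fintype.card ι)
  let e : ι ↪ Fin (Fintype.card ι) := (Fintype.equivFin ι).toEmbedding
  obtain ⟨b, d, hd, mono⟩ := hι (a ∘ e) χ
  exact ⟨b, d, ha (combinatorialCube_comp_embedding_subset a e hd), mono⟩

end Homothety

theorem isLadder_of_forall_exists_mono_smul {S : Set ℤ}
    (h : ∀ (k : ℕ) (χ : ℤ → Fin k) (T : Finset ℕ),
      ∃ b, ∃ d ∈ S, ∃ c, ∀ t ∈ T, χ (b + t • d) = c) :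
    IsLadder S := by
  intro k _ χ L
  obtain ⟨b, d, hd, c, mono⟩ := h k χ (Finset.range (L + 1))
  refine ⟨b, d, hd, fun i hi => ?_⟩
  have mono_i : χ (b + (i : ℤ) * d) = c := by
    simpa only [nsmul_eq_mul] using mono i (Finset.mem_range.2 (hi.trans L.lt_succ_self))
  have mono_zero : χ b = c := by
    simpa only [zero_nsmul, add_zero] using mono 0 (Finset.mem_range.2 L.succ_pos)
  exact mono_i.trans mono_zero.symm

/-- If `S ⊆ ℤ⁺` contains combinatorial cubes of arbitrarily large dimension (for each
`k`, a multiset of `k` positive integers all of whose nonempty subset sums lie in `S`),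
then `S` is a ladder. -/
theorem ladder_of_arbitrarily_large_combinatorial_cubes (S : Set ℤ)
    (hS : ∀ s ∈ S, 0 < s)
    (hcubes : ∀ k : ℕ, ∃ a : Fin k → ℤ, (∀ i, 0 < a i) ∧
      ∀ I : Finset (Fin k), I.Nonempty → (∑ i ∈ I, a i) ∈ S) :
    IsLadder S :=
  isLadder_of_forall_exists_mono_smul fun _ χ T =>
    ladder_of_arbitrarily_large_combinatorial_cubes_general
      (fun n => (hcubes n).imp fun _ ha => combinatorialCube_subset_iff.2 ha.2) T χ
end

section
/- There exists a set S ⊆ ℤ⁺ such that both S and its complement ℤ⁺ \ S are ladders. (For instance, S = {4n² : n ∈ ℤ⁺} is a ladder whose complement contains the ladder {2n² : n ∈ ℤ⁺}.) -/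
/-!
The common difference in van der Waerden's theorem can be bounded by some `N` depending only on the
length and the number of colors. Applying this to `n ↦ χ (m * n)` shows that a set containing
`m, 2m, …, N m` for arbitrarily large `N`, with `m` depending on `N`, is a ladder. Since
`v₂ (2 ^ n * w) = n + v₂ w`, it then suffices to partition `ℕ` into two sets of valuations that both
contain arbitrarily long intervals; splitting by the parity of `⌊√n⌋` does this, because `⌊√·⌋` is
constant on `[u², u² + 2u]`.
-/

open Combinatorics

theorem exists_sum_line_eq_card_nsmul_add {α ι M : Type*} [Fintype ι] [AddCommMonoid M]
    (l : Line α ι) (f : α → M) :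
    ∃ b : M, ∀ x, ∑ i, f (l x i) = Nat.card {i // l.idxFun i = none} • f x + b := by
  classical
  refine ⟨∑ i, (l.idxFun i).elim 0 f, fun x => ?_⟩
  have coord (i : ι) :
      f (l x i) = (if l.idxFun i = none then f x else 0) + (l.idxFun i).elim 0 f := by
    cases hi : l.idxFun i <;> simp [Line.coe_apply, hi]
  simp only [coord, Finset.sum_add_distrib, ← Finset.sum_filter, Finset.sum_const,
    Nat.card_eq_fintype_card, Fintype.card_subtype]

theorem exists_bound_mono_homothetic_copy {M κ : Type*} [AddCommMonoid M] [Finite κ]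
    (s : Finset M) :
    ∃ N : ℕ, ∀ C : M → κ, ∃ a ∈ Finset.Icc 1 N, ∃ (b : M) (c : κ), ∀ x ∈ s,
      C (a • x + b) = c := by
  obtain ⟨ι, _, exists_mono_line⟩ := Line.exists_mono_in_high_dimension s κ
  refine ⟨Nat.card ι, fun C => ?_⟩
  obtain ⟨l, c, hl⟩ := exists_mono_line fun v => C (∑ i, (v i : M))
  obtain ⟨b, hb⟩ := exists_sum_line_eq_card_nsmul_add l ((↑) : s → M)
  have : Nonempty {i // l.idxFun i = none} := nonempty_subtype.mpr l.proper
  refine ⟨Nat.card {i // l.idxFun i = none},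
    Finset.mem_Icc.mpr ⟨Nat.card_pos, Finite.card_subtype_le _⟩, b, c, fun x hx => ?_⟩
  rw [← hb ⟨x, hx⟩]
  exact hl ⟨x, hx⟩

theorem isLadder_of_forall_exists_mul_mem {S : Set ℤ}
    (hS : ∀ N : ℕ, ∃ m : ℤ, ∀ w ∈ Finset.Icc 1 N, m * w ∈ S) : IsLadder S := by
  intro k _ χ L
  obtain ⟨N, exists_mono⟩ := exists_bound_mono_homothetic_copy (κ := Fin k)
    ((Finset.range (L + 1)).image ((↑) : ℕ → ℤ))
  obtain ⟨m, hm⟩ := hS N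
  obtain ⟨w, hw, b, c, hc⟩ := exists_mono fun n => χ (m * n)
  have mono (i : ℕ) (hi : i ≤ L) : χ (m * b + i * (m * w)) = c := by
    rw [← hc i (Finset.mem_image_of_mem _ (Finset.mem_range_succ_iff.mpr hi)), nsmul_eq_mul]
    ring_nf
  refine ⟨m * b, m * w, hm w hw, fun i hi => (mono i hi.le).trans ?_⟩
  simpa using (mono 0 L.zero_le).symm

/-- A set of natural numbers is *thick* if it contains arbitrarily long intervals
`{n, …, n + N}`. Sets of valuations of this kind pull back to sets of integers containing
arbitrarily long blocks `m, 2m, …, N m`. -/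
def IsThick (T : Set ℕ) : Prop :=
  ∀ N : ℕ, ∃ n : ℕ, ∀ i ≤ N, n + i ∈ T

theorem isThick_preimage_sqrt {U : Set ℕ} (hU : U.Infinite) : IsThick (Nat.sqrt ⁻¹' U) := by
  intro N
  obtain ⟨u, hu, hNu⟩ := hU.exists_gt N
  refine ⟨u ^ 2, fun i hi => ?_⟩
  rwa [Set.mem_preimage, Nat.sqrt_add_eq' u (by lia)]

theorem IsThick.isLadder_padicValInt {T : Set ℕ} (hT : IsThick T) (p : ℕ) [Fact p.Prime] :
    IsLadder {x : ℤ | 0 < x ∧ padicValInt p x ∈ T} := by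
  refine isLadder_of_forall_exists_mul_mem fun N => ?_
  obtain ⟨n, hn⟩ := hT N
  refine ⟨(p : ℤ) ^ n, fun w hw => ?_⟩
  obtain ⟨w_pos, w_le⟩ := Finset.mem_Icc.mp hw
  have p_pos : 0 < p := (Fact.out : p.Prime).pos
  have val_mul : padicValInt p ((p : ℤ) ^ n * w) = n + padicValNat p w := by
    rw [padicValInt.mul (by positivity) (by positivity), ← Nat.cast_pow, padicValInt.of_nat,
      padicValInt.of_nat, padicValNat.prime_pow]
  exact ⟨by positivity, val_mul ▸ hn _ ((Nat.padicValNat_le_self w).trans w_le)⟩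

/-- There exists a set `S ⊆ ℤ⁺` such that both `S` and its complement within `ℤ⁺`
are ladders. -/
theorem exists_ladder_with_ladder_complement :
    ∃ S : Set ℤ, S ⊆ {x : ℤ | 0 < x} ∧ IsLadder S ∧
      IsLadder ({x : ℤ | 0 < x} \ S) := by
  let T : Set ℕ := Nat.sqrt ⁻¹' {n | Even n}
  have thick_T : IsThick T :=
    isThick_preimage_sqrt (Nat.frequently_atTop_iff_infinite.mp Nat.frequently_even)
  have thick_compl : IsThick Tᶜ :=
    isThick_preimage_sqrt (U := {n | Even n}ᶜ) <| by
      simpa [Set.compl_ofPred] using Nat.frequently_atTop_iff_infinite.mp Nat.frequently_odd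
  have compl_eq : {x : ℤ | 0 < x} \ {x | 0 < x ∧ padicValInt 2 x ∈ T} =
      {x | 0 < x ∧ padicValInt 2 x ∈ Tᶜ} := by
    ext x
    simp +contextual
  refine ⟨_, fun x hx => hx.1, thick_T.isLadder_padicValInt 2, ?_⟩
  rw [compl_eq]
  exact thick_compl.isLadder_padicValInt 2
end

section
/- Any set S ⊆ ℤ⁺ with upper density 1 contains arbitrarily long sequences of the form {x, 2x, 3x, …, nx}: for every n ∈ ℤ⁺ there exists x ∈ ℤ⁺ such that x, 2x, …, nx all lie in S. -/
/-- `S` has upper density one: `limsup_{n→∞} |S ∩ {1,…,n}| / n = 1`. -/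
def HasUpperDensityOne (S : Set ℤ) : Prop :=
  Filter.atTop.limsup (fun n : ℕ => ((S ∩ Set.Icc (1 : ℤ) (n : ℤ)).ncard : ℝ) / n) = 1

/-!
Let `F` be a finite set of positive integers, all at most `n`. If every positive `x` has a multiple
`m * x ∉ S` with `m ∈ F`, then sending `x ≤ N / n` to the pair `(m, m * x)` is injective and lands
in `F × ({1, …, N} \ S)`. So `{1, …, N} \ S` has at least about `N / (n * #F)` elements, and `S`
has upper density at most `1 - 1 / (n * #F)`.
-/

/-- The upper density of the positive part of a set of integers. The index `N = 0` contributes the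
junk value `0 / 0 = 0`, which does not affect the limsup. -/
noncomputable def upperDensity (S : Set ℤ) : ℝ :=
  Filter.atTop.limsup fun N : ℕ => ((S ∩ Set.Icc (1 : ℤ) N).ncard : ℝ) / N

section

open Filter Topology

variable {S : Set ℤ} {F : Finset ℕ} {n : ℕ}

lemma upperDensity_le_of_forall_ncard_le {c C : ℝ}
    (h : ∀ N : ℕ, ((S ∩ Set.Icc (1 : ℤ) N).ncard : ℝ) ≤ c * N + C) : upperDensity S ≤ c := by
  have hlim : Tendsto (fun N : ℕ => c + C / N) atTop (𝓝 c) := by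
    simpa only [add_zero] using (tendsto_const_div_atTop_nhds_zero_nat C).const_add c
  have hle : ∀ᶠ N : ℕ in atTop, ((S ∩ Set.Icc (1 : ℤ) N).ncard : ℝ) / N ≤ c + C / N := by
    filter_upwards [eventually_gt_atTop 0] with N hN
    have hN' : (N : ℝ) ≠ 0 := Nat.cast_ne_zero.2 hN.ne'
    calc ((S ∩ Set.Icc (1 : ℤ) N).ncard : ℝ) / N ≤ (c * N + C) / N := by gcongr; exact h N
      _ = c + C / N := by rw [add_div, mul_div_cancel_right₀ c hN']
  calc upperDensity S ≤ limsup (fun N : ℕ => c + C / N) atTop :=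
        limsup_le_limsup hle
          (isCoboundedUnder_le_of_le (x := (0 : ℝ)) atTop fun _ => by positivity)
          hlim.isBoundedUnder_le
    _ = c := hlim.limsup_eq

lemma ncard_Icc_one_natCast (N : ℕ) : (Set.Icc (1 : ℤ) N).ncard = N := by
  rw [← Finset.coe_Icc, Set.ncard_coe_finset, Int.card_Icc, add_sub_cancel_right, Int.toNat_natCast]

lemma ncard_inter_Icc_add_ncard_Icc_sdiff (S : Set ℤ) (N : ℕ) :
    (S ∩ Set.Icc (1 : ℤ) N).ncard + (Set.Icc (1 : ℤ) N \ S).ncard = N := by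
  rw [Set.inter_comm, Set.ncard_inter_add_ncard_sdiff_eq_ncard _ _ (Set.finite_Icc _ _),
    ncard_Icc_one_natCast]

lemma div_le_card_mul_ncard_Icc_sdiff (hF : F ⊆ Finset.Icc 1 n)
    (h : ∀ x : ℤ, 0 < x → ∃ m ∈ F, (m : ℤ) * x ∉ S) (N : ℕ) :
    N / n ≤ F.card * (Set.Icc (1 : ℤ) N \ S).ncard := by
  choose! m hmF hmS using h
  have hm_pos : ∀ x, 0 < x → (0 : ℤ) < m x := fun x hx => by
    exact_mod_cast (Finset.mem_Icc.1 (hF (hmF x hx))).1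
  have hm_le : ∀ x, 0 < x → (m x : ℤ) ≤ n := fun x hx => by
    exact_mod_cast (Finset.mem_Icc.1 (hF (hmF x hx))).2
  have hmaps : ∀ x ∈ Set.Icc (1 : ℤ) (N / n : ℕ),
      (m x, (m x : ℤ) * x) ∈ (F : Set ℕ) ×ˢ (Set.Icc (1 : ℤ) N \ S) := by
    rintro x ⟨hx : 0 < x, hxN⟩
    have hle : (m x : ℤ) * x ≤ N := calc
      (m x : ℤ) * x ≤ n * (N / n : ℕ) :=
        mul_le_mul (hm_le x hx) hxN hx.le (Nat.cast_nonneg n)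
      _ ≤ N := by exact_mod_cast Nat.mul_div_le N n
    exact ⟨hmF x hx, ⟨mul_pos (hm_pos x hx) hx, hle⟩, hmS x hx⟩
  have hinj : Set.InjOn (fun x => (m x, (m x : ℤ) * x)) (Set.Icc (1 : ℤ) (N / n : ℕ)) := by
    intro x hx y _ hxy
    obtain ⟨hm, hmul⟩ := Prod.mk.inj hxy
    rw [← hm] at hmul
    exact mul_left_cancel₀ (hm_pos x hx.1).ne' hmul
  calc N / n = (Set.Icc (1 : ℤ) (N / n : ℕ)).ncard := (ncard_Icc_one_natCast _).symm
    _ ≤ ((F : Set ℕ) ×ˢ (Set.Icc (1 : ℤ) N \ S)).ncard :=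
        Set.ncard_le_ncard_of_injOn _ hmaps hinj
          (F.finite_toSet.prod (Set.finite_Icc _ _ |>.sdiff))
    _ = F.card * (Set.Icc (1 : ℤ) N \ S).ncard := by
        rw [Set.ncard_prod, Set.ncard_coe_finset]

lemma upperDensity_le_of_forall_exists_mul_notMem (hF : F ⊆ Finset.Icc 1 n)
    (h : ∀ x : ℤ, 0 < x → ∃ m ∈ F, (m : ℤ) * x ∉ S) :
    upperDensity S ≤ 1 - 1 / (n * F.card) := by
  have hcard : (F.card : ℝ) ≠ 0 := by
    obtain ⟨m, hm, -⟩ := h 1 one_pos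
    exact Nat.cast_ne_zero.2 (Finset.card_ne_zero_of_mem hm)
  refine upperDensity_le_of_forall_ncard_le (C := 1 / F.card) fun N => ?_
  have hsum : ((S ∩ Set.Icc (1 : ℤ) N).ncard : ℝ) + (Set.Icc (1 : ℤ) N \ S).ncard = N := by
    exact_mod_cast ncard_inter_Icc_add_ncard_Icc_sdiff S N
  have hdiff : (N : ℝ) / n ≤ F.card * (Set.Icc (1 : ℤ) N \ S).ncard + 1 := calc
    (N : ℝ) / n ≤ (N / n : ℕ) + 1 := by
      rw [← Nat.floor_div_eq_div (K := ℝ)]; exact (Nat.lt_floor_add_one _).le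
    _ ≤ F.card * (Set.Icc (1 : ℤ) N \ S).ncard + 1 := by
      gcongr; exact_mod_cast div_le_card_mul_ncard_Icc_sdiff hF h N
  have hmissing : (N : ℝ) / (n * F.card) ≤ (Set.Icc (1 : ℤ) N \ S).ncard + 1 / F.card := calc
    (N : ℝ) / (n * F.card) = N / n / F.card := (div_div _ _ _).symm
    _ ≤ (F.card * (Set.Icc (1 : ℤ) N \ S).ncard + 1) / F.card := by gcongr
    _ = (Set.Icc (1 : ℤ) N \ S).ncard + 1 / F.card := by
      rw [add_div, mul_div_cancel_left₀ _ hcard]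
  rw [sub_mul, one_mul, one_div_mul_eq_div]
  linarith

theorem multiples_of_upper_density_one_general (hF : F ⊆ Finset.Icc 1 n)
    (hS : 1 - 1 / ((n : ℝ) * F.card) < upperDensity S) :
    ∃ x : ℤ, 0 < x ∧ ∀ m ∈ F, (m : ℤ) * x ∈ S := by
  by_contra! h
  exact hS.not_ge (upperDensity_le_of_forall_exists_mul_notMem hF h)

end

/-- Any set `S ⊆ ℤ⁺` with upper density 1 contains, for every `n ≥ 1`, a sequence of
the form `x, 2x, …, nx`. -/
theorem multiples_of_upper_density_one (S : Set ℤ) (hS : ∀ s ∈ S, 0 < s)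
    (hdens : HasUpperDensityOne S) :
    ∀ n : ℕ, 1 ≤ n → ∃ x : ℤ, 0 < x ∧ ∀ m : ℕ, 1 ≤ m → m ≤ n → (m : ℤ) * x ∈ S := by
  intro n hn
  have hdens' : 1 - 1 / ((n : ℝ) * (Finset.Icc 1 n).card) < upperDensity S := by
    rw [show upperDensity S = 1 from hdens, Nat.card_Icc, Nat.add_sub_cancel]
    exact sub_lt_self 1 (by positivity)
  obtain ⟨x, hx, hxS⟩ := multiples_of_upper_density_one_general subset_rfl hdens'
  exact ⟨x, hx, fun m hm hmn => hxS m (Finset.mem_Icc.2 ⟨hm, hmn⟩)⟩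
end

section
/- Let P be a polynomial with integer coefficients of degree at least 2 with positive leading coefficient and P(0) = 0, and let S = P(ℤ) ∩ ℤ⁺ be the set of positive values of P. Then both S and its complement ℤ⁺ \ S are ladders. -/
/-!
The values of `P` form a ladder by the polynomial van der Waerden theorem, applied to the
polynomials `i * P` with `i < L`. That theorem is proved by Walters' color-focusing argument:
after subtracting a polynomial `p` of minimal degree from the translates
`q (x + e) - q e` of the members `q` of the family, fewer leading coefficients occur in
degree `deg p` and none change in higher degrees, so that one may induct on the numbers of leading
coefficients in each degree, compared from the highest degree downwards.

For the complement, van der Waerden's theorem provides a *finite* set `D` of differences that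
suffices for every coloring with `k` colors. As `P` grows faster than linearly, its values have
density zero, so some dilate `m * D` contains none of them; rescaling the coloring
by `m` turns the differences in `D` into differences in `m * D`.
-/

open Polynomial Filter
open scoped Pointwise Finset

namespace PolynomialVanDerWaerden

universe u

variable {R : Type u} [CommRing R]

section ShiftDiff

variable {p q : R[X]} {e : R}

/-- The difference polynomial `q (x + e) - q e - p x`, by which a polynomial `q` of a family is
replaced when the family is reduced with respect to its member `p`. -/
noncomputable def shiftDiff (p q : R[X]) (e : R) : R[X] :=
  taylor e q - C (q.eval e) - p

@[simp]
theorem eval_shiftDiff (p q : R[X]) (e x : R) :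
    (shiftDiff p q e).eval x = q.eval (x + e) - q.eval e - p.eval x := by
  simp [shiftDiff, taylor_eval]

@[simp]
theorem coeff_zero_shiftDiff (p q : R[X]) (e : R) :
    (shiftDiff p q e).coeff 0 = -p.coeff 0 := by
  simp [shiftDiff]

theorem coeff_natDegree_shiftDiff (hq : 0 < q.natDegree) :
    (shiftDiff p q e).coeff q.natDegree = q.leadingCoeff - p.coeff q.natDegree := by
  simp [shiftDiff, coeff_taylor_natDegree, coeff_C, hq.ne']

theorem natDegree_shiftDiff_le (h : p.natDegree ≤ q.natDegree) :
    (shiftDiff p q e).natDegree ≤ q.natDegree := by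
  refine (natDegree_sub_le_of_le ?_ h).trans (max_self _).le
  rw [natDegree_sub_C, natDegree_taylor]

theorem coeff_natDegree_shiftDiff_of_lt (h : p.natDegree < q.natDegree) :
    (shiftDiff p q e).coeff q.natDegree = q.leadingCoeff := by
  rw [coeff_natDegree_shiftDiff (by lia), coeff_eq_zero_of_natDegree_lt h, sub_zero]

theorem natDegree_shiftDiff (h : p.natDegree < q.natDegree) :
    (shiftDiff p q e).natDegree = q.natDegree := by
  refine (natDegree_shiftDiff_le h.le).antisymm (le_natDegree_of_ne_zero ?_)
  rw [coeff_natDegree_shiftDiff_of_lt h, leadingCoeff_ne_zero]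
  exact ne_zero_of_natDegree_gt h

theorem leadingCoeff_shiftDiff (h : p.natDegree < q.natDegree) :
    (shiftDiff p q e).leadingCoeff = q.leadingCoeff := by
  rw [leadingCoeff, natDegree_shiftDiff h, coeff_natDegree_shiftDiff_of_lt h]

end ShiftDiff

section Reduction

variable {A : Finset R[X]} {p : R[X]} {E : Finset R} {j : ℕ}

open scoped Classical in
/-- The set of leading coefficients of the polynomials of degree `j` in a family. -/
noncomputable def leadingCoeffs (A : Finset R[X]) (j : ℕ) : Finset R :=
  {q ∈ A | q.natDegree = j}.image leadingCoeff

theorem mem_leadingCoeffs {c : R} :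
    c ∈ leadingCoeffs A j ↔ ∃ q ∈ A, q.natDegree = j ∧ q.leadingCoeff = c := by
  simp [leadingCoeffs, and_assoc]

open scoped Classical in
/-- The number of leading coefficients in each degree. In the colexicographic order, which compares
the highest degrees first, this is the quantity on which the polynomial van der Waerden theorem is
proved by induction. -/
noncomputable def weight (A : Finset R[X]) : Colex (ℕ →₀ ℕ) :=
  toColex <| Finsupp.onFinset (A.image natDegree) (fun j => #(leadingCoeffs A j)) fun j hj => by
    obtain ⟨c, hc⟩ := Finset.card_ne_zero.1 hj
    obtain ⟨q, hq, hqj, -⟩ := mem_leadingCoeffs.1 hc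
    exact Finset.mem_image.2 ⟨q, hq, hqj⟩

theorem weight_lt_weight_iff {A B : Finset R[X]} :
    weight A < weight B ↔ ∃ i, (∀ j, i < j → #(leadingCoeffs A j) = #(leadingCoeffs B j)) ∧
      #(leadingCoeffs A i) < #(leadingCoeffs B i) :=
  Finsupp.Colex.lt_iff

open scoped Classical in
/-- The family of the nonzero polynomials `q (x + e) - q e - p x`, for `q ∈ A` and `e ∈ E`. -/
noncomputable def reduce (p : R[X]) (A : Finset R[X]) (E : Finset R) : Finset R[X] :=
  ((A ×ˢ E).image fun z => shiftDiff p z.1 z.2).erase 0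

theorem mem_reduce {s : R[X]} :
    s ∈ reduce p A E ↔ s ≠ 0 ∧ ∃ q ∈ A, ∃ e ∈ E, shiftDiff p q e = s := by
  simp [reduce, and_assoc]

theorem leadingCoeffs_reduce_of_lt (hmin : ∀ q ∈ A, p.natDegree ≤ q.natDegree)
    (hE : E.Nonempty) (hj : p.natDegree < j) :
    leadingCoeffs (reduce p A E) j = leadingCoeffs A j := by
  ext c
  rw [mem_leadingCoeffs, mem_leadingCoeffs]
  constructor
  · rintro ⟨s, hs, hsj, rfl⟩
    obtain ⟨-, q, hq, e, -, rfl⟩ := mem_reduce.1 hs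
    have hpq : p.natDegree < q.natDegree :=
      hj.trans_le (hsj.ge.trans (natDegree_shiftDiff_le (hmin q hq)))
    exact ⟨q, hq, by rw [← hsj, natDegree_shiftDiff hpq], (leadingCoeff_shiftDiff hpq).symm⟩
  · rintro ⟨q, hq, rfl, rfl⟩
    obtain ⟨e, he⟩ := hE
    have hs : (shiftDiff p q e).natDegree = q.natDegree := natDegree_shiftDiff hj
    exact ⟨_, mem_reduce.2 ⟨ne_zero_of_natDegree_gt (hs ▸ hj), q, hq, e, he, rfl⟩, hs,
      leadingCoeff_shiftDiff hj⟩

open scoped Classical in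
theorem leadingCoeffs_reduce_natDegree_subset (hmin : ∀ q ∈ A, p.natDegree ≤ q.natDegree)
    (hp : 0 < p.natDegree) :
    leadingCoeffs (reduce p A E) p.natDegree ⊆
      ((leadingCoeffs A p.natDegree).erase p.leadingCoeff).image (· - p.leadingCoeff) := by
  intro c hc
  obtain ⟨s, hs, hsp, rfl⟩ := mem_leadingCoeffs.1 hc
  obtain ⟨hs0, q, hq, e, -, rfl⟩ := mem_reduce.1 hs
  have hqp : q.natDegree = p.natDegree := by
    refine (hmin q hq).antisymm' (not_lt.1 fun hlt => ?_)
    exact hlt.ne (hsp ▸ natDegree_shiftDiff hlt)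
  have hlead : (shiftDiff p q e).leadingCoeff = q.leadingCoeff - p.leadingCoeff := by
    rw [leadingCoeff, hsp, ← hqp, coeff_natDegree_shiftDiff (hqp ▸ hp), hqp, coeff_natDegree]
  have hne : q.leadingCoeff ≠ p.leadingCoeff := by
    rwa [← sub_ne_zero, ← hlead, leadingCoeff_ne_zero]
  exact Finset.mem_image.2
    ⟨_, Finset.mem_erase.2 ⟨hne, mem_leadingCoeffs.2 ⟨q, hq, hqp, rfl⟩⟩, hlead.symm⟩

theorem weight_reduce_lt (hpA : p ∈ A) (hmin : ∀ q ∈ A, p.natDegree ≤ q.natDegree)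
    (hp : 0 < p.natDegree) (hE : E.Nonempty) : weight (reduce p A E) < weight A := by
  classical
  refine weight_lt_weight_iff.2
    ⟨p.natDegree, fun j hj => by rw [leadingCoeffs_reduce_of_lt hmin hE hj], ?_⟩
  calc
    #(leadingCoeffs (reduce p A E) p.natDegree)
      ≤ #((leadingCoeffs A p.natDegree).erase p.leadingCoeff) :=
        (Finset.card_le_card (leadingCoeffs_reduce_natDegree_subset hmin hp)).trans
          Finset.card_image_le
    _ < #(leadingCoeffs A p.natDegree) :=
        Finset.card_erase_lt_of_mem (mem_leadingCoeffs.2 ⟨p, hpA, rfl, rfl⟩)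

end Reduction

section ColorFocusing

variable {K : Type*} {A : Finset R[X]} {D D' E : Finset R} {χ : R → K} {a b d : R} {c : K}

/-- For some `d ∈ D`, all the points `a + q d` with `q ∈ A` have color `c`. -/
def IsMonoPattern (A : Finset R[X]) (D : Finset R) (χ : R → K) (a : R) (c : K) : Prop :=
  ∃ d ∈ D, ∀ q ∈ A, χ (a + q.eval d) = c

theorem IsMonoPattern.mono (h : IsMonoPattern A D χ a c) (hD : D ⊆ D') :
    IsMonoPattern A D' χ a c :=
  h.imp fun _ hd => ⟨hD hd.1, hd.2⟩

theorem IsMonoPattern.translate (h : IsMonoPattern A D (fun t => χ (b + t)) a c) :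
    IsMonoPattern A D χ (b + a) c := by
  simpa only [IsMonoPattern, add_assoc] using h

theorem isMonoPattern_self (hA : ∀ q ∈ A, q.coeff 0 = 0) (hE : 0 ∈ E) :
    IsMonoPattern A E χ a (χ a) :=
  ⟨0, hE, fun q hq => by rw [← coeff_zero_eq_eval_zero, hA q hq, add_zero]⟩

open scoped Classical in
theorem IsMonoPattern.focus {p : R[X]} {W : Finset R}
    (h : IsMonoPattern A E (fun t => χ (b + t)) a c) (hd : d ∈ D)
    (hW : ∀ q ∈ A, ∀ e ∈ E, a + q.eval e ∈ W)
    (hχ : ∀ q ∈ A, ∀ e ∈ E, ∀ t ∈ W, χ (b + (shiftDiff p q e).eval d + t) = χ (b + t)) :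
    IsMonoPattern A (D + E) χ (b + a - p.eval d) c := by
  obtain ⟨e, he, hc⟩ := h
  refine ⟨d + e, Finset.add_mem_add hd he, fun q hq => ?_⟩
  calc
    χ (b + a - p.eval d + q.eval (d + e))
      = χ (b + (shiftDiff p q e).eval d + (a + q.eval e)) := by
        rw [eval_shiftDiff]; ring_nf
    _ = χ (b + (a + q.eval e)) := hχ q hq e he _ (hW q hq e he)
    _ = c := hc q hq

/-- A family is recurrent if every finite coloring of `R` is constant on `a` and all `a + q d`,
`q ∈ A`, for some `a` and some `d ∈ T`. The pair `(a, d)` is required to lie in a finite set that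
depends on the set of colors but not on the coloring: the induction colors by the restriction of
a coloring to a finite window. -/
def IsRecurrent (T : AddSubsemigroup R) (A : Finset R[X]) : Prop :=
  ∀ (K : Type u) [Finite K], ∃ F D : Finset R, (D : Set R) ⊆ T ∧
    ∀ χ : R → K, ∃ a ∈ F, IsMonoPattern A D χ a (χ a)

variable {T : AddSubsemigroup R}

theorem isRecurrent_empty (hT : (T : Set R).Nonempty) : IsRecurrent T (∅ : Finset R[X]) := by
  obtain ⟨d, hd⟩ := hT
  exact fun K _ => ⟨{0}, {d}, by simpa using hd, fun χ => ⟨0, by simp, d, by simp, by simp⟩⟩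

theorem IsRecurrent.exists_window {p : R[X]} (hred : IsRecurrent T (reduce p A E))
    (K : Type u) [Finite K] (W : Finset R) :
    ∃ F D : Finset R, (D : Set R) ⊆ T ∧ ∀ χ : R → K, ∃ b ∈ F, ∃ d ∈ D,
      ∀ q ∈ A, ∀ e ∈ E, ∀ t ∈ W, χ (b + (shiftDiff p q e).eval d + t) = χ (b + t) := by
  obtain ⟨F, D, hDT, hF⟩ := hred (W → K)
  refine ⟨F, D, hDT, fun χ => ?_⟩
  obtain ⟨b, hb, d, hd, hmono⟩ := hF fun x t => χ (x + t)
  refine ⟨b, hb, d, hd, fun q hq e he t ht => ?_⟩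
  by_cases h0 : shiftDiff p q e = 0
  · rw [h0, eval_zero, add_zero]
  · exact congrFun (hmono _ (mem_reduce.2 ⟨h0, q, hq, e, he, rfl⟩)) ⟨t, ht⟩

open scoped Classical in
theorem coe_union_add_insert_zero_subset (hD : (D : Set R) ⊆ T) (hD' : (D' : Set R) ⊆ T) :
    ((D ∪ (D' + insert 0 D) : Finset R) : Set R) ⊆ T := by
  intro x hx
  simp only [Finset.coe_union, Finset.coe_add, Finset.coe_insert, Set.mem_union] at hx
  rcases hx with hx | ⟨d, hd, e, rfl | he, rfl⟩
  · exact hD hx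
  · simpa using hD' hd
  · exact T.add_mem (hD' hd) (hD he)

open scoped Classical in
theorem exists_insert_focused {p : R[X]} {W : Finset R} {S : Finset K}
    (hA : ∀ q ∈ A, q.coeff 0 = 0) (hS : ∀ c ∈ S, IsMonoPattern A D (fun t => χ (b + t)) a c)
    (hba : χ (b + a) ∉ S) (hd : d ∈ D')
    (hW : ∀ q ∈ A, ∀ e ∈ insert 0 D, a + q.eval e ∈ W)
    (hχ : ∀ q ∈ A, ∀ e ∈ insert 0 D, ∀ t ∈ W,
      χ (b + (shiftDiff p q e).eval d + t) = χ (b + t)) :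
    ∃ S' : Finset K, #S' = #S + 1 ∧
      ∀ c ∈ S', IsMonoPattern A (D' + insert 0 D) χ (b + a - p.eval d) c := by
  refine ⟨insert (χ (b + a)) S, Finset.card_insert_of_notMem hba, fun c hc => ?_⟩
  suffices IsMonoPattern A (insert 0 D) (fun t => χ (b + t)) a c from this.focus hd hW hχ
  rcases Finset.mem_insert.1 hc with rfl | hc
  · exact isMonoPattern_self (χ := fun t => χ (b + t)) hA (Finset.mem_insert_self _ _)
  · exact (hS c hc).mono (Finset.subset_insert _ _)

theorem exists_focused (hA : ∀ q ∈ A, q.coeff 0 = 0) {p : R[X]}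
    (hred : ∀ E : Finset R, E.Nonempty → IsRecurrent T (reduce p A E))
    (K : Type u) [Finite K] (r : ℕ) :
    ∃ F D : Finset R, (D : Set R) ⊆ T ∧ ∀ χ : R → K, ∃ a ∈ F,
      IsMonoPattern A D χ a (χ a) ∨
        ∃ S : Finset K, #S = r ∧ ∀ c ∈ S, IsMonoPattern A D χ a c := by
  classical
  induction r with
  | zero => exact ⟨{0}, ∅, by simp, fun χ => ⟨0, by simp, Or.inr ⟨∅, by simp⟩⟩⟩
  | succ r ih =>
    obtain ⟨F, D, hD, hF⟩ := ih
    let W := F + (A ×ˢ insert 0 D).image fun z => z.1.eval z.2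
    obtain ⟨F', D', hD', hF'⟩ := (hred _ (Finset.insert_nonempty 0 D)).exists_window K W
    refine ⟨(F' + F) ∪ (F' + F - D'.image p.eval), D ∪ (D' + insert 0 D),
      coe_union_add_insert_zero_subset hD hD', fun χ => ?_⟩
    obtain ⟨b, hb, d, hd, hχ⟩ := hF' χ
    obtain ⟨a, ha, hmono⟩ := hF fun t => χ (b + t)
    have hba : b + a ∈ F' + F := Finset.add_mem_add hb ha
    have hW : ∀ q ∈ A, ∀ e ∈ insert 0 D, a + q.eval e ∈ W := fun q hq e he =>
      Finset.add_mem_add ha (Finset.mem_image.2 ⟨(q, e), Finset.mk_mem_product hq he, rfl⟩)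
    by_cases hself : IsMonoPattern A D (fun t => χ (b + t)) a (χ (b + a))
    · exact ⟨b + a, Finset.mem_union_left _ hba,
        Or.inl (hself.translate.mono Finset.subset_union_left)⟩
    obtain ⟨S, rfl, hS⟩ := hmono.resolve_left hself
    obtain ⟨S', hcard, hS'⟩ := exists_insert_focused hA hS (fun h => hself (hS _ h)) hd hW hχ
    exact ⟨b + a - p.eval d,
      Finset.mem_union_right _ (Finset.sub_mem_sub hba (Finset.mem_image_of_mem _ hd)),
      Or.inr ⟨S', hcard, fun c hc => (hS' c hc).mono Finset.subset_union_right⟩⟩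

theorem IsRecurrent.of_reduce (hA : ∀ q ∈ A, q.coeff 0 = 0) {p : R[X]}
    (hred : ∀ E : Finset R, E.Nonempty → IsRecurrent T (reduce p A E)) : IsRecurrent T A := by
  intro K _
  have := Fintype.ofFinite K
  obtain ⟨F, D, hDT, hF⟩ := exists_focused hA hred K (Fintype.card K)
  refine ⟨F, D, hDT, fun χ => ?_⟩
  obtain ⟨a, ha, hmono | ⟨S, hS, hfocus⟩⟩ := hF χ
  · exact ⟨a, ha, hmono⟩
  · exact ⟨a, ha, hfocus _ ((Finset.card_eq_iff_eq_univ S).1 hS ▸ Finset.mem_univ _)⟩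

theorem isRecurrent_of_zero_notMem (hT : (T : Set R).Nonempty) (h0 : 0 ∉ A)
    (hA : ∀ q ∈ A, q.coeff 0 = 0) : IsRecurrent T A := by
  induction A using WellFounded.induction (InvImage.wf weight wellFounded_lt) with
  | _ A ih =>
    rcases A.eq_empty_or_nonempty with rfl | hne
    · exact isRecurrent_empty hT
    obtain ⟨p, hpA, hmin⟩ := A.exists_min_image natDegree hne
    have hp : 0 < p.natDegree := by
      refine Nat.pos_of_ne_zero fun hdeg => h0 ?_
      have hp0 : p = 0 := by rw [eq_C_of_natDegree_eq_zero hdeg, hA p hpA, C_0]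
      exact hp0 ▸ hpA
    refine IsRecurrent.of_reduce hA (p := p) fun E hE =>
      ih _ (weight_reduce_lt hpA hmin hp hE) (fun h => (mem_reduce.1 h).1 rfl) fun s hs => ?_
    obtain ⟨-, q, -, e, -, rfl⟩ := mem_reduce.1 hs
    rw [coeff_zero_shiftDiff, hA p hpA, neg_zero]

theorem isRecurrent_of_coeff_zero (hT : (T : Set R).Nonempty) (hA : ∀ q ∈ A, q.coeff 0 = 0) :
    IsRecurrent T A := by
  classical
  intro K _
  obtain ⟨F, D, hDT, hF⟩ := isRecurrent_of_zero_notMem hT (A.notMem_erase 0)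
    (fun q hq => hA q (Finset.mem_of_mem_erase hq)) K
  refine ⟨F, D, hDT, fun χ => ?_⟩
  obtain ⟨a, ha, d, hd, hmono⟩ := hF χ
  refine ⟨a, ha, d, hd, fun q hq => ?_⟩
  rcases eq_or_ne q 0 with rfl | hq0
  · rw [eval_zero, add_zero]
  · exact hmono q (Finset.mem_erase.2 ⟨hq0, hq⟩)

end ColorFocusing

theorem exists_monochromatic_progression {T : AddSubsemigroup R} (hT : (T : Set R).Nonempty)
    {P : R[X]} (hP : P.coeff 0 = 0) (L : ℕ) (K : Type u) [Finite K] :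
    ∃ D : Finset R, (D : Set R) ⊆ T ∧ ∀ χ : R → K, ∃ a, ∃ d ∈ D,
      ∀ i < L, χ (a + i * P.eval d) = χ a := by
  classical
  obtain ⟨F, D, hDT, hF⟩ := isRecurrent_of_coeff_zero hT
    (A := (Finset.range L).image fun i : ℕ => (i : R[X]) * P) (by simp [hP]) K
  refine ⟨D, hDT, fun χ => ?_⟩
  obtain ⟨a, -, d, hd, hmono⟩ := hF χ
  refine ⟨a, d, hd, fun i hi => ?_⟩
  simpa using hmono _ (Finset.mem_image_of_mem _ (Finset.mem_range.2 hi))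

end PolynomialVanDerWaerden

/-- The additive semigroup of integers that are at least `M`. -/
def integersGE (M : ℕ) : AddSubsemigroup ℤ where
  carrier := Set.Ici (M : ℤ)
  add_mem' {a b} (ha : (M : ℤ) ≤ a) (hb : (M : ℤ) ≤ b) := show (M : ℤ) ≤ a + b by lia

theorem integersGE_nonempty (M : ℕ) : (integersGE M : Set ℤ).Nonempty :=
  Set.nonempty_Ici

theorem eventually_eval_pos {P : ℤ[X]} (hdeg : 0 < P.natDegree) (hlead : 0 < P.leadingCoeff) :
    ∀ᶠ n : ℤ in atTop, 0 < P.eval n := by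
  have hinj : Function.Injective (Int.castRingHom ℝ) := Int.cast_injective
  have hreal := (P.map (Int.castRingHom ℝ)).tendsto_atTop_of_leadingCoeff_nonneg
    (by rwa [degree_map_eq_of_injective hinj, ← natDegree_pos_iff_degree_pos])
    (by simpa [leadingCoeff_map_of_injective hinj] using hlead.le)
  filter_upwards [(hreal.comp tendsto_intCast_atTop_atTop).eventually_gt_atTop 0] with n hn
  simpa using hn

theorem isLadder_setOf_pos_eval {P : ℤ[X]} (hdeg : 0 < P.natDegree)
    (hlead : 0 < P.leadingCoeff) (hzero : P.eval 0 = 0) :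
    IsLadder {y : ℤ | 0 < y ∧ ∃ x : ℤ, P.eval x = y} := by
  intro k _ χ L
  obtain ⟨M, hM⟩ := eventually_atTop.1 (eventually_eval_pos hdeg hlead)
  obtain ⟨D, hD, hmono⟩ := PolynomialVanDerWaerden.exists_monochromatic_progression
    (integersGE_nonempty M.toNat) (by rwa [coeff_zero_eq_eval_zero]) L (Fin k)
  obtain ⟨a, d, hd, hχ⟩ := hmono χ
  have hMd : M ≤ d := (Int.self_le_toNat M).trans (hD hd)
  exact ⟨a, P.eval d, ⟨hM d hMd, d, rfl⟩, hχ⟩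

theorem isLadder_of_forall_exists_dilate {S : Set ℤ}
    (hS : ∀ D : Finset ℤ, (∀ d ∈ D, 0 < d) → ∃ m : ℤ, ∀ d ∈ D, m * d ∈ S) : IsLadder S := by
  intro k _ χ L
  obtain ⟨D, hD, hmono⟩ := PolynomialVanDerWaerden.exists_monochromatic_progression
    (integersGE_nonempty 1) (coeff_X_zero (R := ℤ)) L (Fin k)
  obtain ⟨m, hm⟩ := hS D fun d hd => hD hd
  obtain ⟨a, d, hd, hχ⟩ := hmono fun t => χ (m * t)
  refine ⟨m * a, m * d, hm d hd, fun i hi => ?_⟩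
  rw [← hχ i hi, eval_X]
  ring_nf

theorem exists_mem_Icc_forall_ne_mul (f : ℤ → ℤ) (X : Finset ℤ) {D : Finset ℤ} (hD : 0 ∉ D) :
    ∃ m ∈ Set.Icc (1 : ℤ) (#X * #D + 1), ∀ d ∈ D, ∀ x ∈ X, f x ≠ m * d := by
  let quotients := (X ×ˢ D).image fun z => f z.1 / z.2
  have hcard : #quotients < #(Finset.Icc (1 : ℤ) (#X * #D + 1)) := by
    have hle : #quotients ≤ #X * #D := Finset.card_image_le.trans (Finset.card_product _ _).le
    rw [Int.card_Icc]
    lia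
  obtain ⟨m, hmem, hm⟩ := Finset.exists_mem_notMem_of_card_lt_card hcard
  refine ⟨m, Finset.mem_Icc.1 hmem, fun d hd x hx hf => hm (Finset.mem_image.2
    ⟨(x, d), Finset.mk_mem_product hx hd, ?_⟩)⟩
  rw [hf, Int.mul_ediv_cancel _ (ne_of_mem_of_not_mem hd hD)]

theorem exists_pos_forall_mul_notMem_range {f : ℤ → ℤ}
    (hf : ∀ K : ℤ, {x | |f x| ≤ K * |x|}.Finite) {D : Finset ℤ} (hD : 0 ∉ D) :
    ∃ m > 0, ∀ d ∈ D, m * d ∉ Set.range f := by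
  obtain ⟨W, hW0, hW⟩ : ∃ W : ℤ, 0 ≤ W ∧ ∀ d ∈ D, |d| ≤ W :=
    ⟨∑ d ∈ D, |d|, D.sum_nonneg fun _ _ => abs_nonneg _,
      fun d hd => Finset.single_le_sum (fun _ _ => abs_nonneg _) hd⟩
  -- The factor is chosen so that all solutions of `f x = m * d` with `d ∈ D` and
  -- `m ≤ (2 * r + 1) * #D + 1` satisfy `|x| ≤ r`.
  obtain ⟨r, hWr, hr⟩ : ∃ r, W ≤ r ∧ ∀ x, |f x| ≤ (2 * W * #D + 1) * |x| → |x| ≤ r := by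
    obtain ⟨r, hr⟩ := ((hf (2 * W * #D + 1)).image (|·|)).bddAbove
    exact ⟨max W r, le_max_left _ _, fun x hx =>
      (hr (Set.mem_image_of_mem _ hx)).trans (le_max_right _ _)⟩
  obtain ⟨m, ⟨hm1, hmle⟩, hm⟩ := exists_mem_Icc_forall_ne_mul f (Finset.Icc (-r) r) hD
  rw [Int.card_Icc_of_le _ _ (by lia)] at hmle
  refine ⟨m, hm1, fun d hd ⟨x, hx⟩ => hm d hd x (Finset.mem_Icc.2 (abs_le.1 ?_)) hx⟩
  by_contra! hlt
  refine hlt.not_ge (hr x ?_)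
  have hWD : 0 ≤ W * #D := by positivity
  calc
    |f x| = m * |d| := by rw [hx, abs_mul, abs_of_pos hm1]
    _ ≤ m * W := by gcongr; exact hW d hd
    _ ≤ (r + 1 - -r) * #D * W + W := by linarith [mul_le_mul_of_nonneg_right hmle hW0]
    _ ≤ (2 * W * #D + 1) * (r + 1) := by linarith
    _ ≤ (2 * W * #D + 1) * |x| := by gcongr; exact hlt

theorem finite_abs_eval_le_mul_abs {P : ℤ[X]} (hdeg : 2 ≤ P.natDegree) (K : ℤ) :
    {x | |P.eval x| ≤ K * |x|}.Finite := by
  have hlt : (C K * X).degree < P.degree :=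
    degree_lt_degree ((natDegree_C_mul_le K X).trans_lt (natDegree_X.trans_lt hdeg))
  refine (finite_abs_eval_le_of_degree_lt hlt).subset fun x (hx : |P.eval x| ≤ K * |x|) => ?_
  change |P.eval x| ≤ |(C K * X).eval x|
  calc
    |P.eval x| ≤ |K| * |x| := hx.trans (by gcongr; exact le_abs_self K)
    _ = _ := by simp [abs_mul]

theorem isLadder_pos_diff_setOf_pos_eval {P : ℤ[X]} (hdeg : 2 ≤ P.natDegree) :
    IsLadder ({x : ℤ | 0 < x} \ {y : ℤ | 0 < y ∧ ∃ x : ℤ, P.eval x = y}) := by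
  refine isLadder_of_forall_exists_dilate fun D hD => ?_
  obtain ⟨m, hm, hrange⟩ := exists_pos_forall_mul_notMem_range
    (finite_abs_eval_le_mul_abs hdeg) fun h => (hD 0 h).false
  exact ⟨m, fun d hd => ⟨mul_pos hm (hD d hd), fun h => hrange d hd h.2⟩⟩

/-- If `P ∈ ℤ[x]` has degree at least 2, positive leading coefficient, and `P(0) = 0`,
then the set `S` of positive values of `P` and its complement within `ℤ⁺` are both
ladders. -/
theorem polynomial_values_and_complement_ladders (P : Polynomial ℤ)
    (hdeg : 2 ≤ P.natDegree) (hlead : 0 < P.leadingCoeff) (hzero : P.eval 0 = 0) :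
    IsLadder {y : ℤ | 0 < y ∧ ∃ x : ℤ, P.eval x = y} ∧
      IsLadder ({x : ℤ | 0 < x} \ {y : ℤ | 0 < y ∧ ∃ x : ℤ, P.eval x = y}) :=
  ⟨isLadder_setOf_pos_eval (by lia) hlead hzero, isLadder_pos_diff_setOf_pos_eval hdeg⟩
end

section
/- Let G be an acyclic directed graph on a vertex set V, given by an edge relation r : V → V → Prop admitting no directed cycles. Then G has infinite chromatic number if and only if G is accessible. -/
/-!
Given a finite coloring `c`, discard the edges that are not monochromatic. The remaining graph
still has infinite chromatic number: a proper coloring of it, paired with `c`, would be a proper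
coloring of the original graph. As in the proof of the Gallai–Roy theorem, a graph without
walks of length `n` is properly colored by the `n` possible lengths of a longest walk leaving each
vertex, since this length drops along every edge. Hence the monochromatic edges contain
arbitrarily long walks.
-/

/-- A directed graph with edge relation `r` has *infinite chromatic number* if every
finite coloring has a monochromatic edge. -/
def InfChromatic {V : Type*} (r : V → V → Prop) : Prop :=
  ∀ k : ℕ, 1 ≤ k → ∀ c : V → Fin k, ∃ u v : V, r u v ∧ c u = c v

/-- A directed graph with edge relation `r` is *accessible* if every finite coloring
admits arbitrarily long monochromatic directed paths. -/
def Accessible {V : Type*} (r : V → V → Prop) : Prop :=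
  ∀ k : ℕ, 1 ≤ k → ∀ c : V → Fin k, ∀ n : ℕ,
    ∃ v : ℕ → V, (∀ i : ℕ, i < n → r (v i) (v (i + 1))) ∧
      ∀ i : ℕ, i ≤ n → c (v i) = c (v 0)

/-- A directed graph is *acyclic* if it has no directed cycles. -/
def Acyclic {V : Type*} (r : V → V → Prop) : Prop :=
  ¬ ∃ (m : ℕ) (v : ℕ → V), 1 ≤ m ∧ v m = v 0 ∧ ∀ i : ℕ, i < m → r (v i) (v (i + 1))

/-- `HasWalkFrom r n x` says that a directed walk with `n` edges of `r` starts at `x`. Vertices may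
repeat, and the values `v i` with `i > n` are irrelevant. -/
def HasWalkFrom {V : Type*} (r : V → V → Prop) (n : ℕ) (x : V) : Prop :=
  ∃ v : ℕ → V, v 0 = x ∧ ∀ i < n, r (v i) (v (i + 1))

section

variable {V : Type*} {r : V → V → Prop}

theorem hasWalkFrom_zero (r : V → V → Prop) (x : V) : HasWalkFrom r 0 x :=
  ⟨fun _ => x, rfl, fun _ hi => absurd hi (Nat.not_lt_zero _)⟩

theorem HasWalkFrom.cons {n : ℕ} {x y : V} (hxy : r x y) (hy : HasWalkFrom r n y) :
    HasWalkFrom r (n + 1) x := by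
  obtain ⟨v, rfl, hv⟩ := hy
  refine ⟨fun i => Nat.casesOn i x v, rfl, ?_⟩
  rintro (_ | i) hi
  · exact hxy
  · exact hv i (Nat.lt_of_succ_lt_succ hi)

theorem exists_height_of_forall_not_hasWalkFrom {n : ℕ} (hn : ∀ x, ¬ HasWalkFrom r n x) :
    ∃ height : V → Fin n, ∀ x y, r x y → height y < height x := by
  classical
  let longest (x : V) : ℕ := Nat.findGreatest (HasWalkFrom r · x) n
  have longest_spec (x : V) : HasWalkFrom r (longest x) x :=
    Nat.findGreatest_spec (P := (HasWalkFrom r · x)) n.zero_le (hasWalkFrom_zero r x)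
  have longest_lt (x : V) : longest x < n :=
    (Nat.findGreatest_le n).lt_of_ne fun h => hn x (h ▸ longest_spec x)
  exact ⟨fun x => ⟨longest x, longest_lt x⟩, fun x y hxy =>
    Nat.le_findGreatest (longest_lt y) ((longest_spec y).cons hxy)⟩

theorem InfChromatic.exists_monochromatic_edge {α : Type*} [Finite α] (hr : InfChromatic r)
    (c : V → α) : ∃ x y, r x y ∧ c x = c y := by
  obtain ⟨x, -⟩ := hr 1 le_rfl fun _ => 0
  have : Nonempty α := ⟨c x⟩
  let e : α ≃ Fin (Nat.card α) := Finite.equivFin α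
  obtain ⟨x, y, hxy, hc⟩ := hr (Nat.card α) Nat.card_pos (e ∘ c)
  exact ⟨x, y, hxy, e.injective hc⟩

theorem InfChromatic.restrict_monochromatic {α : Type*} [Finite α] (hr : InfChromatic r)
    (c : V → α) : InfChromatic fun x y => r x y ∧ c x = c y := by
  intro k _ d
  obtain ⟨x, y, hxy, hcd⟩ := hr.exists_monochromatic_edge fun x => (c x, d x)
  obtain ⟨hc, hd⟩ := Prod.mk.inj hcd
  exact ⟨x, y, ⟨hxy, hc⟩, hd⟩

theorem InfChromatic.exists_hasWalkFrom (hr : InfChromatic r) (n : ℕ) :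
    ∃ x, HasWalkFrom r n x := by
  by_contra! hn
  obtain ⟨height, height_lt⟩ := exists_height_of_forall_not_hasWalkFrom hn
  obtain ⟨x, y, hxy, hheight⟩ := hr.exists_monochromatic_edge height
  exact (height_lt x y hxy).ne' hheight

theorem InfChromatic.accessible (hr : InfChromatic r) : Accessible r := by
  intro k _ c n
  obtain ⟨_, v, -, hv⟩ := (hr.restrict_monochromatic c).exists_hasWalkFrom n
  refine ⟨v, fun i hi => (hv i hi).1, fun i => ?_⟩
  induction i with
  | zero => exact fun _ => rfl
  | succ i ih => exact fun hi => (hv i hi).2.symm.trans (ih (Nat.le_of_succ_le hi))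

theorem Accessible.infChromatic (hr : Accessible r) : InfChromatic r := by
  intro k hk c
  obtain ⟨v, hv, hc⟩ := hr k hk c 1
  exact ⟨v 0, v 1, hv 0 Nat.zero_lt_one, (hc 1 le_rfl).symm⟩

end

theorem acyclic_infChromatic_iff_accessible_general {V : Type*} (r : V → V → Prop) :
    InfChromatic r ↔ Accessible r :=
  ⟨InfChromatic.accessible, Accessible.infChromatic⟩

/-- An acyclic directed graph has infinite chromatic number iff it is accessible. -/
theorem acyclic_infChromatic_iff_accessible {V : Type*} (r : V → V → Prop)
    (hacyclic : Acyclic r) : InfChromatic r ↔ Accessible r :=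
  acyclic_infChromatic_iff_accessible_general r
end
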